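/- Let ν be a Borel probability measure on the space C_conf((-1,1)^d) of conformal maps of (-1,1)^d (with the topology of uniform convergence) and let μ be a Borel probability measure on (-1,1)^d. Define the generalized convolution ν·μ by (ν·μ)(A) = ∫ (h_*μ)(A) dν(h). Suppose that μ and ν·μ are exact-dimensional and dim(ν·μ) = dim μ > 0. Then lim_{n→∞} ∫∫ (1/n) ∫₁ⁿ d_LP((ν·μ)_{y,t}, (h_*μ)_{y,t}) dt d(h_*μ)(y) dν(h) = 0, where d_LP is the Lévy–Prokhorov metric on probability measures on B(0,1). -/

import Mathlib

/-!
The argument compares entropies. Write `κ_h = h_*μ` and `λ = ν·μ = ∫ κ_h dν(h)`, and consider dyadic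
partitions of generation `k`, translated by the vectors `θ ∈ {0, 1/3}^d`.

*Entropy.* The mean relative entropy `I_k = ∫ D_k(κ_h ‖ λ) dν(h)` on the generation-`k` partition
equals `H_k(λ) - ∫ H_k(κ_h) dν(h)` (`integral_cellDiv`). Since `λ` is exact-dimensional,
`H_k(λ) ≤ k (s log 2 + o(1))` with `s` the dimension (`cellEnt_eventually_le`). Conformal maps have
locally Lipschitz inverses, so the `κ_h` have local dimension `s` as well, and
`∫ H_k(κ_h) dν(h) ≥ k (s log 2 - o(1))` (`tendsto_truncEnt`). Hence `I_k ≤ o(k)`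
(`cellDiv_sublinear`), and the sum of `I_{k+m} - I_k` over `k < n`, which telescopes, is at most
`o(n)` for each fixed `m` (`sum_increment_le`).

*From entropy to total variation.* The increment `I_{k+m} - I_k` is the mean relative entropy,
seen at `m` generations of resolution, of the conditional measures of `κ_h` and `λ` on generation-`k`
cells; a Pinsker-type inequality, linear in the entropy, turns this into a bound for the mean
conditional total variation (`sum_cellTV_le`).

*From total variation to sceneries.* Every `y` lies well inside its cell for one of the grids
(`exists_shift`), so for `t` slightly larger than `k` the window `B(y, 2⁻ᵗ)` is inside one cell.
There the Lévy–Prokhorov distance of the two magnifications is bounded by the conditional total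
variation, the size `2⁻ᵐ` of subcells, and the mass of a thin annulus around the boundary of the
window (`levyProkhorov_resc_le`). The last term need not be small for a given `t`, but it is small
on average over `t` because the mass of balls is monotone in the radius
(`integral_antitone_sub_le`). Integrating in `y` and `h` gives `integral_integral_scenery_le`, and
letting `n → ∞` concludes (`tendsto_scenery`).
-/

open MeasureTheory Metric Filter Set Topology
open scoped ENNReal NNReal Pointwise

noncomputable section

/-- `ℝ^d` with the maximum metric, so that `ball 0 1 = (-1,1)^d`. -/
abbrev Euc (d : ℕ) : Type := Fin d → ℝ

/-- The (lower Hausdorff) dimension of a measure: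
`dim μ = inf { dim_H A : A Borel, μ A > 0 }`. -/
def mdim {X : Type*} [EMetricSpace X] [MeasurableSpace X] (μ : Measure X) : ℝ≥0∞ :=
  ⨅ (A : Set X) (_ : MeasurableSet A) (_ : 0 < μ A), dimH A

/-- The topological support of a measure. -/
def msupport {X : Type*} [TopologicalSpace X] [MeasurableSpace X] (μ : Measure X) : Set X :=
  {x | ∀ U : Set X, IsOpen U → x ∈ U → 0 < μ U}

/-- The matrix of the derivative of `f` at `x`. -/
def Dmat {d : ℕ} (f : Euc d → Euc d) (x : Euc d) : Matrix (Fin d) (Fin d) ℝ :=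
  LinearMap.toMatrix' (fderiv ℝ f x : Euc d →ₗ[ℝ] Euc d)

/-- The conformal scaling factor `‖Df(x)‖ = |det Df(x)|^{1/d}` of a conformal map. -/
def confScale {d : ℕ} (f : Euc d → Euc d) (x : Euc d) : ℝ :=
  |LinearMap.det (fderiv ℝ f x : Euc d →ₗ[ℝ] Euc d)| ^ ((d : ℝ)⁻¹)

/-- The special orthogonal group `SO(d)`, as a set of matrices. -/
def SOset (d : ℕ) : Set (Matrix (Fin d) (Fin d) ℝ) :=
  {O | O ∈ Matrix.orthogonalGroup (Fin d) ℝ ∧ O.det = 1}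

/-- The conformal orthogonal group `CO(d) = {rO : r > 0, O ∈ SO(d)}`, as a set of matrices. -/
def COset (d : ℕ) : Set (Matrix (Fin d) (Fin d) ℝ) :=
  {A | ∃ r : ℝ, 0 < r ∧ ∃ O ∈ SOset d, A = r • O}

/-- `⟨A⟩`: the closure of the set of finite (nonempty) products of elements of `A`. -/
def genClosure {G : Type*} [Monoid G] [TopologicalSpace G] (A : Set G) : Set G :=
  closure {g | ∃ l : List G, l ≠ [] ∧ (∀ x ∈ l, x ∈ A) ∧ l.prod = g}

/-- `f` is a conformal map on `U`: injective on `U`, `closure (f '' U) ⊆ U`, differentiable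
with conformal derivative `Df(x) = c • O`, `O` orthogonal, and `Df` Hölder continuous. -/
def IsConformalMapOn (d : ℕ) (f : Euc d → Euc d) (U : Set (Euc d)) : Prop :=
  Set.InjOn f U ∧ closure (f '' U) ⊆ U ∧ (∀ x ∈ U, DifferentiableAt ℝ f x) ∧
    (∀ x ∈ U, ∃ c : ℝ, 0 < c ∧ ∃ O ∈ Matrix.orthogonalGroup (Fin d) ℝ,
      (fderiv ℝ f x : Euc d →ₗ[ℝ] Euc d) = c • O.mulVecLin) ∧
    (∃ C α : ℝ≥0, 0 < α ∧ HolderOnWith C α (fun x => fderiv ℝ f x) U)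

/-- A conformal iterated function system on `(-1,1)^d`: at least two contractive
conformal maps. -/
structure ConformalIFS (d : ℕ) where
  n : ℕ
  two_le : 2 ≤ n
  funs : Fin n → Euc d → Euc d
  conf : ∀ i, IsConformalMapOn d (funs i) (Metric.ball 0 1)
  contr : ∀ i, ∃ r : ℝ, r < 1 ∧ ∀ x ∈ Metric.ball (0 : Euc d) 1, confScale (funs i) x ≤ r

/-- `μ` is a self-conformal measure associated to `Φ`: a Borel probability measure on
`(-1,1)^d` with `μ = Σ_i p_i • (f_i)_* μ` for a strictly positive probability vector `p`. -/
def IsSelfConformal {d : ℕ} (Φ : ConformalIFS d) (μ : Measure (Euc d)) : Prop :=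
  IsProbabilityMeasure μ ∧ μ (Metric.ball (0 : Euc d) 1)ᶜ = 0 ∧
    ∃ p : Fin Φ.n → ℝ≥0∞, (∀ i, 0 < p i) ∧ (∑ i, p i) = 1 ∧
      μ = ∑ i, p i • μ.map (Φ.funs i)

/-- `K` is the attractor of `Φ`: the unique nonempty compact set with `K = ⋃ i, f_i(K)`. -/
def IsAttractor {d : ℕ} (Φ : ConformalIFS d) (K : Set (Euc d)) : Prop :=
  K.Nonempty ∧ IsCompact K ∧ K ⊆ Metric.ball 0 1 ∧ K = ⋃ i, Φ.funs i '' K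

/-- `Φ` is totally non-linear: for every conformal map `g` of `(-1,1)^d` there is `f ∈ Φ`
such that `g ∘ f ∘ g⁻¹` is not (the restriction of) an affine map. -/
def TotallyNonLinear {d : ℕ} (Φ : ConformalIFS d) : Prop :=
  ∀ g : Euc d → Euc d, IsConformalMapOn d g (Metric.ball 0 1) →
    ∃ i, ¬ ∃ A : Euc d →ᵃ[ℝ] Euc d, ∀ x ∈ Metric.ball (0 : Euc d) 1, g (Φ.funs i x) = A (g x)

/-- All maps of `Φ` are orientation-preserving. -/
def OrientationPreserving {d : ℕ} (Φ : ConformalIFS d) : Prop :=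
  ∀ i, ∀ x ∈ Metric.ball (0 : Euc d) 1,
    0 < LinearMap.det (fderiv ℝ (Φ.funs i) x : Euc d →ₗ[ℝ] Euc d)

instance {X : Type*} [MeasurableSpace X] : MeasurableSpace (ProbabilityMeasure X) :=
  inferInstanceAs (MeasurableSpace {μ : Measure X // IsProbabilityMeasure μ})

section Scenery

variable {X : Type*} [NormedAddCommGroup X] [NormedSpace ℝ X] [MeasurableSpace X] [BorelSpace X]

/-- The rescaled measure `μ_{x,t}`, with `μ_{x,t}(A) = μ(2^{-t}A + x)/μ(B(x,2^{-t}))`,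
viewed as a measure on `B(0,1)`. -/
def resc (μ : Measure X) (x : X) (t : ℝ) : Measure X :=
  (μ (closedBall x ((2 : ℝ) ^ (-t))))⁻¹ •
    ((μ.map (fun y => (2 : ℝ) ^ t • (y - x))).restrict (closedBall (0 : X) 1))

open Classical in
/-- `μ_{x,t}` as a probability measure (junk value if the normalization fails). -/
def rescPM (μ : Measure X) (x : X) (t : ℝ) : ProbabilityMeasure X :=
  if h : IsProbabilityMeasure (resc μ x t) then ⟨resc μ x t, h⟩
  else ⟨Measure.dirac 0, Measure.dirac.isProbabilityMeasure⟩

/-- `P` is a tangent distribution of `μ` at `x`: a weak-* accumulation point, as `T → ∞`,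
of the sceneries `⟨μ⟩_{x,T} = (1/T)∫_0^T δ_{μ_{x,t}} dt`. -/
def IsTangentDistribution (μ : Measure X) (x : X) (P : Measure (ProbabilityMeasure X)) : Prop :=
  IsProbabilityMeasure P ∧
    ∃ T : ℕ → ℝ, (∀ n, 1 ≤ T n) ∧ Tendsto T atTop atTop ∧
      ∀ F : BoundedContinuousFunction (ProbabilityMeasure X) ℝ,
        Tendsto (fun n => (T n)⁻¹ * ∫ t in Set.Ioc (0 : ℝ) (T n), F (rescPM μ x t))
          atTop (𝓝 (∫ η, F η ∂P))

/-- `μ` is tangent-regular: at `μ`-a.e. `x`, every tangent distribution `P` of `μ` at `x`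
satisfies `dim η = dim μ` for `P`-a.e. `η`. -/
def TangentRegular (μ : Measure X) : Prop :=
  ∀ᵐ x ∂μ, ∀ P : Measure (ProbabilityMeasure X), IsTangentDistribution μ x P →
    ∀ᵐ η : ProbabilityMeasure X ∂P, mdim η.toMeasure = mdim μ

/-- The magnification semiflow `S_t : μ ↦ μ_{0,t}` on probability measures. -/
def stMap (t : ℝ) (η : ProbabilityMeasure X) : ProbabilityMeasure X :=
  rescPM η.toMeasure 0 t

/-- `P` is a fractal distribution: an `S_t`-invariant, quasi-Palm probability
distribution on measures. -/
def IsFractalDistribution (P : Measure (ProbabilityMeasure X)) : Prop :=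
  IsProbabilityMeasure P ∧
    (∀ t : ℝ, 0 ≤ t → P.map (stMap t) = P) ∧
    ∀ A : Set (ProbabilityMeasure X), MeasurableSet A → P Aᶜ = 0 →
      ∀ᵐ η : ProbabilityMeasure X ∂P, ∀ᵐ x ∂η.toMeasure, ∀ t : ℝ, 0 ≤ t →
        closedBall x ((2 : ℝ) ^ (-t)) ⊆ closedBall (0 : X) 1 → rescPM η.toMeasure x t ∈ A

/-- `P` is an ergodic fractal distribution. -/
def IsErgodicFD (P : Measure (ProbabilityMeasure X)) : Prop :=
  IsFractalDistribution P ∧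
    ∀ A : Set (ProbabilityMeasure X), MeasurableSet A →
      (∀ t : ℝ, 0 ≤ t → stMap t ⁻¹' A = A) → P A = 0 ∨ P Aᶜ = 0

/-- `μ` is exact-dimensional: the local dimension exists `μ`-a.e. and equals `dim μ`. -/
def ExactDimensional (μ : Measure X) : Prop :=
  ∀ᵐ x ∂μ, Tendsto (fun r : ℝ => Real.log (μ (closedBall x r)).toReal / Real.log r)
    (𝓝[>] (0 : ℝ)) (𝓝 (mdim μ).toReal)

end Scenery

/-- `M` is a `C^k` hypersurface: locally the zero set of a `C^k` real-valued function
with non-vanishing derivative. -/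
def IsCkHypersurface {X : Type*} [NormedAddCommGroup X] [NormedSpace ℝ X]
    (k : ℕ∞) (M : Set X) : Prop :=
  ∀ x ∈ M, ∃ (U : Set X) (F : X → ℝ), IsOpen U ∧ x ∈ U ∧ ContDiffOn ℝ k F U ∧
    (∀ y ∈ U, fderiv ℝ F y ≠ 0) ∧ M ∩ U = {y ∈ U | F y = 0}

/-- An analytic curve: the image of a non-constant real-analytic map defined on an
open interval. -/
def IsAnalyticCurve {d : ℕ} (C : Set (Euc d)) : Prop :=
  ∃ (I : Set ℝ) (γ : ℝ → Euc d), IsOpen I ∧ I.OrdConnected ∧ I.Nonempty ∧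
    AnalyticOnNhd ℝ γ I ∧ (∃ s ∈ I, ∃ t ∈ I, γ s ≠ γ t) ∧ C = γ '' I

/-- An affine hyperplane in `ℝ^d`. -/
def IsAffineHyperplane {d : ℕ} (H : Set (Euc d)) : Prop :=
  ∃ (v : Euc d) (c : ℝ), v ≠ 0 ∧ H = {x : Euc d | (∑ i, v i * x i) = c}

/-- A (d-1)-dimensional (Euclidean) sphere in `ℝ^d`. -/
def IsEucSphere {d : ℕ} (S : Set (Euc d)) : Prop :=
  ∃ (z : Euc d) (r : ℝ), 0 < r ∧ S = {x : Euc d | (∑ i, (x i - z i) ^ 2) = r ^ 2}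

/-- `ν` is `s`-Ahlfors-regular. -/
def IsAhlforsRegular {d : ℕ} (ν : Measure (Euc d)) (s : ℝ) : Prop :=
  ν ≠ 0 ∧ ∃ C : ℝ≥0∞, 1 ≤ C ∧ C ≠ ∞ ∧ ∀ x ∈ msupport ν, ∀ r : ℝ, 0 < r →
    r ≤ Metric.diam (msupport ν) →
      ENNReal.ofReal (r ^ s) / C ≤ ν (closedBall x r) ∧
        ν (closedBall x r) ≤ C * ENNReal.ofReal (r ^ s)

/-- `xf` assigns to each map of `Φ` its fixed point in `(-1,1)^d`. -/
def IsFixedPoints {d : ℕ} (Φ : ConformalIFS d) (xf : Fin Φ.n → Euc d) : Prop :=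
  ∀ i, xf i ∈ Metric.ball (0 : Euc d) 1 ∧ Φ.funs i (xf i) = xf i

/-- `λ(f_i)`: the contraction ratio of `f_i` at its fixed point. -/
def fixLam {d : ℕ} (Φ : ConformalIFS d) (xf : Fin Φ.n → Euc d) (i : Fin Φ.n) : ℝ :=
  confScale (Φ.funs i) (xf i)

/-- `O(f_i)`: the rotation part of `Df_i` at the fixed point of `f_i`. -/
def fixO {d : ℕ} (Φ : ConformalIFS d) (xf : Fin Φ.n → Euc d) (i : Fin Φ.n) :
    Matrix (Fin d) (Fin d) ℝ :=
  (fixLam Φ xf i)⁻¹ • Dmat (Φ.funs i) (xf i)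

/-- `O(Φ) = {O(f), O(f)⁻¹ : f ∈ Φ}`. -/
def OsetOf {d : ℕ} (Φ : ConformalIFS d) (xf : Fin Φ.n → Euc d) :
    Set (Matrix (Fin d) (Fin d) ℝ) :=
  {M | ∃ i, M = fixO Φ xf i ∨ M = (fixO Φ xf i)⁻¹}

/-- `S_t (L, I)`: push a measure on `ℝ^d × ℝ^d` forward by `(u,v) ↦ (Lu, v)` and
magnify by `S_t`. -/
def StLI {d : ℕ} (L : Matrix (Fin d) (Fin d) ℝ) (t : ℝ)
    (η : ProbabilityMeasure (Euc d × Euc d)) : ProbabilityMeasure (Euc d × Euc d) :=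
  rescPM (η.toMeasure.map (fun p => (L.mulVec p.1, p.2))) 0 t

/-- The matrix of `D(h ∘ f ∘ h⁻¹)` at `h z`, computed by the chain rule. -/
def DfhMat {d : ℕ} (h f : Euc d → Euc d) (z : Euc d) : Matrix (Fin d) (Fin d) ℝ :=
  Dmat h (f z) * Dmat f z * (Dmat h z)⁻¹

/-- The space of conformal maps of `(-1,1)^d`, with the topology of uniform convergence. -/
abbrev ConfMaps (d : ℕ) :=
  {g : UniformFun (Euc d) (Euc d) //
    IsConformalMapOn d (UniformFun.toFun g) (Metric.ball 0 1)}

noncomputable instance (d : ℕ) : MeasurableSpace (ConfMaps d) := borel (ConfMaps d)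

end

/-! ### Dyadic cells -/

/-- The index of the dyadic cell of side `2⁻ᵏ`, in the grid translated by `θ`, that contains `y`. -/
noncomputable def cell {d : ℕ} (θ : Euc d) (k : ℕ) (y : Euc d) : Fin d → ℤ :=
  fun i => ⌊(2 : ℝ) ^ k * (y i - θ i)⌋

/-- The index of the ancestor, `m` generations up, of the dyadic cell with index `c`. -/
def par {d : ℕ} (m : ℕ) (c : Fin d → ℤ) : Fin d → ℤ := fun i => c i / 2 ^ m

/-- A finite set of indices containing those of all cells of generation `k` that meet `(-1,1)^d`. -/
noncomputable def cellBox (d k : ℕ) : Finset (Fin d → ℤ) :=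
  Fintype.piFinset fun _ => Finset.Icc (-(2 : ℤ) ^ (k + 1)) (2 ^ (k + 1))

/-- The grid translations `{0, 1/3}^d`. -/
noncomputable def shifts (d : ℕ) : Finset (Euc d) :=
  Fintype.piFinset fun _ => {0, 1 / 3}

/-- The `κ`-mass of the dyadic cell with index `c`. -/
noncomputable def cellMass {d : ℕ} (κ : Measure (Euc d)) (θ : Euc d) (k : ℕ) (c : Fin d → ℤ) : ℝ :=
  κ.real (cell θ k ⁻¹' {c})

section SceneryProof

set_option linter.unusedSectionVars false

variable {d : ℕ}

lemma par_cell (θ : Euc d) (k m : ℕ) (y : Euc d) : par m (cell θ (k + m) y) = cell θ k y := by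
  funext i
  have := Int.floor_div_natCast ((2 : ℝ) ^ (k + m) * (y i - θ i)) (2 ^ m)
  simp only [par, cell]
  push_cast at this
  rw [← this]
  congr 1
  field_simp
  ring

lemma measurable_cell (θ : Euc d) (k : ℕ) : Measurable (cell θ k) := by
  unfold cell
  fun_prop

lemma dist_le_of_cell_eq {θ : Euc d} {k : ℕ} {y z : Euc d} (h : cell θ k y = cell θ k z) :
    dist y z ≤ ((2 : ℝ) ^ k)⁻¹ := by
  refine (dist_pi_le_iff (by positivity)).2 fun i => ?_
  have hi := congrFun h i
  simp only [cell] at hi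
  have := Int.abs_sub_lt_one_of_floor_eq_floor hi
  rw [Real.dist_eq]
  have h2 : (2 : ℝ) ^ k * |y i - z i| < 1 := by
    have habs : |(2 : ℝ) ^ k * (y i - z i)| = 2 ^ k * |y i - z i| := by
      rw [abs_mul, abs_of_pos (by positivity)]
    rwa [← habs,
      show (2 : ℝ) ^ k * (y i - z i) = 2 ^ k * (y i - θ i) - 2 ^ k * (z i - θ i) by ring]
  rw [← one_div, le_div_iff₀ (by positivity)]
  linarith

lemma cell_mem_cellBox {θ : Euc d} (hθ : θ ∈ shifts d) (k : ℕ) {y : Euc d}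
    (hy : y ∈ ball (0 : Euc d) 1) : cell θ k y ∈ cellBox d k := by
  simp only [cellBox, Fintype.mem_piFinset, Finset.mem_Icc, cell]
  intro i
  have h0 : 0 ≤ θ i ∧ θ i ≤ 1 := by
    simp only [shifts, Fintype.mem_piFinset] at hθ
    have := hθ i
    simp only [Finset.mem_insert, Finset.mem_singleton] at this
    rcases this with h | h <;> rw [h] <;> norm_num
  have hy1 : |y i| < 1 := by
    have := (norm_le_pi_norm y i).trans_lt (by simpa using hy)
    simpa using this
  have hy2 := abs_lt.1 hy1
  have hp : (0 : ℝ) < 2 ^ k := by positivity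
  constructor
  · rw [Int.le_floor]
    push_cast
    rw [pow_succ]
    nlinarith
  · rw [← Int.cast_le (R := ℝ)]
    refine (Int.floor_le _).trans ?_
    push_cast
    rw [pow_succ]
    nlinarith

lemma par_mem_cellBox {k m : ℕ} {c : Fin d → ℤ} (hc : c ∈ cellBox d (k + m)) :
    par m c ∈ cellBox d k := by
  simp only [cellBox, Fintype.mem_piFinset, Finset.mem_Icc, par] at hc ⊢
  intro i
  have h2 : (0 : ℤ) < 2 ^ m := by positivity
  constructor
  · rw [Int.le_ediv_iff_mul_le h2]
    refine le_trans (le_of_eq ?_) (hc i).1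
    ring
  · refine Int.ediv_le_of_le_mul h2 (le_trans (hc i).2 (le_of_eq ?_))
    ring

/-- The one-third trick in one coordinate: `1/3` is far from all dyadic rationals, so that one of
two translated grids has no point close to `x`. -/
lemma exists_shift_real (k : ℕ) (x : ℝ) : ∃ θ ∈ ({0, 1 / 3} : Finset ℝ), ∀ z : ℝ,
    |z - x| ≤ ((2 : ℝ) ^ (k + 3))⁻¹ → ⌊(2 : ℝ) ^ k * (z - θ)⌋ = ⌊(2 : ℝ) ^ k * (x - θ)⌋ := by
  have hp : (0 : ℝ) < 2 ^ k := by positivity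
  have key : ∀ z : ℝ, |z - x| ≤ ((2 : ℝ) ^ (k + 3))⁻¹ →
      2 ^ k * z - 2 ^ k * x ≤ 1 / 8 ∧ -(1 / 8) ≤ 2 ^ k * z - 2 ^ k * x := by
    intro z hz
    have h1 := abs_le.1 hz
    have h2 : (2 : ℝ) ^ k * ((2 : ℝ) ^ (k + 3))⁻¹ = 1 / 8 := by
      rw [pow_add]; field_simp; norm_num
    constructor <;> nlinarith
  set u := (2 : ℝ) ^ k * x with hu
  have f0 := Int.fract_nonneg u
  have f1 := Int.fract_lt_one u
  have fu := Int.floor_add_fract u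
  by_cases hf : 1 / 8 ≤ Int.fract u ∧ Int.fract u < 7 / 8
  · refine ⟨0, by simp, fun z hz => ?_⟩
    obtain ⟨k1, k2⟩ := key z hz
    simp only [sub_zero]
    rw [← hu, Int.floor_eq_iff]
    constructor <;> linarith [hf.1, hf.2]
  · refine ⟨1 / 3, by simp, fun z hz => ?_⟩
    obtain ⟨k1, k2⟩ := key z hz
    -- `N` is the integer nearest to `u`
    obtain ⟨N, hN1, hN2⟩ : ∃ N : ℤ, u - N < 1 / 8 ∧ -(1 / 8) ≤ u - N := by
      by_cases h8 : 1 / 8 ≤ Int.fract u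
      · refine ⟨⌊u⌋ + 1, ?_, ?_⟩ <;> push_cast
        · linarith
        · by_contra hcon
          exact hf ⟨h8, by linarith⟩
      · refine ⟨⌊u⌋, ?_, ?_⟩ <;> linarith
    have hmod : ∃ M : ℤ, (2 : ℝ) ^ k = 3 * M + 1 ∨ (2 : ℝ) ^ k = 3 * M + 2 := by
      clear * -
      induction k with
      | zero => exact ⟨0, by norm_num⟩
      | succ n ih =>
        obtain ⟨M, h | h⟩ := ih
        · exact ⟨2 * M, Or.inr (by rw [pow_succ, h]; push_cast; ring)⟩
        · exact ⟨2 * M + 1, Or.inl (by rw [pow_succ, h]; push_cast; ring)⟩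
    obtain ⟨M, hM⟩ := hmod
    have e1 : ∀ w : ℝ, |2 ^ k * w - u| ≤ 1 / 8 → ⌊(2 : ℝ) ^ k * (w - 1 / 3)⌋ = N - M - 1 := by
      intro w hw
      have hw := abs_le.1 hw
      rw [Int.floor_eq_iff]
      push_cast
      rcases hM with h | h <;> constructor <;> linarith
    rw [e1 z (abs_le.2 ⟨k2, k1⟩), e1 x (by rw [← hu]; simp)]

lemma exists_shift (k : ℕ) (y : Euc d) : ∃ θ ∈ shifts d,
    ∀ z ∈ closedBall y (((2 : ℝ) ^ (k + 3))⁻¹), cell θ k z = cell θ k y := by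
  choose θ hθ h using fun i => exists_shift_real k (y i)
  refine ⟨θ, by simpa [shifts, Fintype.mem_piFinset] using hθ, fun z hz => funext fun i => ?_⟩
  refine h i (z i) ?_
  rw [← Real.dist_eq]
  exact (dist_le_pi_dist z y i).trans hz

section Sums

variable {κ : Measure (Euc d)} [IsProbabilityMeasure κ]

lemma cellMass_nonneg (θ : Euc d) (k : ℕ) (c : Fin d → ℤ) : 0 ≤ cellMass κ θ k c :=
  measureReal_nonneg

lemma cellMass_le_one (θ : Euc d) (k : ℕ) (c : Fin d → ℤ) : cellMass κ θ k c ≤ 1 :=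
  measureReal_le_one

lemma measurableSet_cell (θ : Euc d) (k : ℕ) (c : Fin d → ℤ) :
    MeasurableSet (cell θ k ⁻¹' {c}) :=
  measurable_cell θ k (measurableSet_singleton c)

lemma ae_mem_ball (hκ : κ (ball (0 : Euc d) 1)ᶜ = 0) : ∀ᵐ y ∂κ, y ∈ ball (0 : Euc d) 1 := by
  rw [ae_iff]; exact hκ

lemma measurable_comp_cell (θ : Euc d) (k : ℕ) (F : (Fin d → ℤ) → ℝ) :
    Measurable fun y => F (cell θ k y) :=
  (Measurable.of_discrete (f := F)).comp (measurable_cell θ k)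

lemma integrable_cell (hκ : κ (ball (0 : Euc d) 1)ᶜ = 0) {θ : Euc d} (hθ : θ ∈ shifts d) (k : ℕ)
    (F : (Fin d → ℤ) → ℝ) : Integrable (fun y => F (cell θ k y)) κ := by
  refine Integrable.of_bound (measurable_comp_cell θ k F).aestronglyMeasurable
    (∑ c ∈ cellBox d k, |F c|) ?_
  filter_upwards [ae_mem_ball hκ] with y hy
  exact Finset.single_le_sum (f := fun c => |F c|) (fun c _ => abs_nonneg _)
    (cell_mem_cellBox hθ k hy)

lemma integral_cell (hκ : κ (ball (0 : Euc d) 1)ᶜ = 0) {θ : Euc d} (hθ : θ ∈ shifts d) (k : ℕ)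
    (F : (Fin d → ℤ) → ℝ) :
    ∫ y, F (cell θ k y) ∂κ = ∑ c ∈ cellBox d k, cellMass κ θ k c * F c := by
  have h1 : ∫ y, F (cell θ k y) ∂κ =
      ∫ y, ∑ c ∈ cellBox d k, (cell θ k ⁻¹' {c}).indicator (fun _ => F c) y ∂κ := by
    refine integral_congr_ae ?_
    filter_upwards [ae_mem_ball hκ] with y hy
    rw [Finset.sum_eq_single_of_mem (cell θ k y) (cell_mem_cellBox hθ k hy)]
    · simp
    · intro b _ hb
      simp [indicator, hb.symm]
  rw [h1, integral_finsetSum]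
  · refine Finset.sum_congr rfl fun c _ => ?_
    rw [integral_indicator_const _ (measurableSet_cell θ k c)]
    rfl
  · intro c _
    exact (integrable_const _).indicator (measurableSet_cell θ k c)

lemma sum_cellMass (hκ : κ (ball (0 : Euc d) 1)ᶜ = 0) {θ : Euc d} (hθ : θ ∈ shifts d) (k : ℕ) :
    ∑ c ∈ cellBox d k, cellMass κ θ k c = 1 := by
  have := integral_cell hκ hθ k (fun _ => 1)
  simpa using this.symm

/-- Summing a function of the ancestors over the cells of generation `k + m`. -/
lemma sum_par (hκ : κ (ball (0 : Euc d) 1)ᶜ = 0) {θ : Euc d} (hθ : θ ∈ shifts d) (k m : ℕ)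
    (F : (Fin d → ℤ) → ℝ) :
    ∑ e ∈ cellBox d (k + m), cellMass κ θ (k + m) e * F (par m e) =
      ∑ c ∈ cellBox d k, cellMass κ θ k c * F c := by
  rw [← integral_cell hκ hθ k F, ← integral_cell hκ hθ (k + m) (fun e => F (par m e))]
  simp only [par_cell]

lemma cellMass_pos_ae (θ : Euc d) (k : ℕ) :
    ∀ᵐ y ∂κ, 0 < cellMass κ θ k (cell θ k y) := by
  have hnull : κ (⋃ c ∈ {c | cellMass κ θ k c = 0}, cell θ k ⁻¹' {c}) = 0 := by
    rw [measure_biUnion_null_iff (to_countable _)]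
    intro c hc
    have hc : cellMass κ θ k c = 0 := hc
    simpa [cellMass, measureReal_eq_zero_iff] using hc
  filter_upwards [measure_eq_zero_iff_ae_notMem.1 hnull] with y hn
  refine lt_of_le_of_ne (cellMass_nonneg _ _ _) fun h0 => hn ?_
  simp only [mem_iUnion]
  exact ⟨cell θ k y, h0.symm, rfl⟩

lemma cellMass_le_par (θ : Euc d) (k m : ℕ) (e : Fin d → ℤ) :
    cellMass κ θ (k + m) e ≤ cellMass κ θ k (par m e) := by
  refine measureReal_mono ?_
  intro y hy
  have hy : cell θ (k + m) y = e := hy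
  show cell θ k y = par m e
  rw [← hy, par_cell]

lemma card_par_fiber (k m : ℕ) (c : Fin d → ℤ) :
    ({e ∈ cellBox d (k + m) | par m e = c}.card : ℝ) ≤ (2 ^ m) ^ d := by
  have : {e ∈ cellBox d (k + m) | par m e = c} ⊆
      Fintype.piFinset fun i => Finset.Ico (c i * 2 ^ m) (c i * 2 ^ m + 2 ^ m) := by
    intro e he
    have he := (Finset.mem_filter.1 he).2
    rw [Fintype.mem_piFinset]
    intro i
    have hi : e i / 2 ^ m = c i := congrFun he i
    have h2 : (0 : ℤ) < 2 ^ m := by positivity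
    rw [Finset.mem_Ico, ← hi]
    constructor
    · exact Int.ediv_mul_le _ h2.ne'
    · have := Int.lt_ediv_add_one_mul_self (e i) h2
      linarith
  have h1 := Finset.card_le_card this
  rw [Fintype.card_piFinset] at h1
  simp at h1
  exact_mod_cast h1

/-- The mean of `κ(D_k(y)) / κ(D_{k+m}(y))` against a function of `D_k(y)` costs at most the number
of descendants of a cell. -/
lemma sum_ratio_le (k m : ℕ) (θ : Euc d)
    (W : (Fin d → ℤ) → ℝ) (hW : ∀ c, 0 ≤ W c) :
    ∑ e ∈ cellBox d (k + m), cellMass κ θ (k + m) e *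
        (W (par m e) * (cellMass κ θ k (par m e) / cellMass κ θ (k + m) e)) ≤
      (2 ^ m) ^ d * ∑ c ∈ cellBox d k, cellMass κ θ k c * W c := by
  calc _ ≤ ∑ e ∈ cellBox d (k + m), cellMass κ θ k (par m e) * W (par m e) := by
        refine Finset.sum_le_sum fun e _ => ?_
        by_cases h0 : cellMass κ θ (k + m) e = 0
        · rw [h0, zero_mul]
          exact mul_nonneg (cellMass_nonneg _ _ _) (hW _)
        · apply le_of_eq
          field_simp
    _ = ∑ c ∈ cellBox d k, ∑ e ∈ cellBox d (k + m) with par m e = c,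
          cellMass κ θ k c * W c := by
        rw [← Finset.sum_fiberwise_of_maps_to (g := par m) (t := cellBox d k)]
        · refine Finset.sum_congr rfl fun c _ => Finset.sum_congr rfl fun e he => ?_
          rw [(Finset.mem_filter.1 he).2]
        · intro e he
          exact par_mem_cellBox he
    _ ≤ _ := by
        rw [Finset.mul_sum]
        refine Finset.sum_le_sum fun c _ => ?_
        rw [Finset.sum_const, nsmul_eq_mul]
        exact mul_le_mul_of_nonneg_right (card_par_fiber k m c)
          (mul_nonneg (cellMass_nonneg _ _ _) (hW _))

end Sums

end SceneryProof

/-! ### Relative entropy and conditional total variation -/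

section SceneryProof

set_option linter.unusedSectionVars false

variable {d : ℕ}

/-- A pointwise substitute for Pinsker's inequality, linear in the relative entropy density. -/
lemma abs_sub_le_entropy {p q ε : ℝ} (hp : 0 < p) (hq : 0 < q) (hε : 0 < ε) :
    |p - q| ≤ (4 * ε)⁻¹ * (p * (Real.log p - Real.log q) - p + q) + 2 * ε * (p + q) := by
  obtain ⟨a, ha, rfl⟩ : ∃ a : ℝ, 0 < a ∧ a ^ 2 = p := ⟨√p, by positivity, Real.sq_sqrt hp.le⟩
  obtain ⟨b, hb, rfl⟩ : ∃ b : ℝ, 0 < b ∧ b ^ 2 = q := ⟨√q, by positivity, Real.sq_sqrt hq.le⟩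
  have h1 : Real.log b - Real.log a ≤ b / a - 1 := by
    rw [← Real.log_div hb.ne' ha.ne']
    exact Real.log_le_sub_one_of_pos (by positivity)
  have h2 : (a - b) ^ 2 ≤ a ^ 2 * (Real.log (a ^ 2) - Real.log (b ^ 2)) - a ^ 2 + b ^ 2 := by
    rw [Real.log_pow, Real.log_pow]
    push_cast
    have h3 : a ^ 2 * (Real.log b - Real.log a) ≤ a ^ 2 * (b / a - 1) :=
      mul_le_mul_of_nonneg_left h1 (by positivity)
    have h4 : a ^ 2 * (b / a - 1) = a * b - a ^ 2 := by field_simp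
    nlinarith
  have h5 : |a ^ 2 - b ^ 2| ≤ (4 * ε)⁻¹ * (a - b) ^ 2 + ε * (a + b) ^ 2 := by
    rw [show a ^ 2 - b ^ 2 = (a - b) * (a + b) by ring, abs_mul, abs_of_pos (add_pos ha hb),
      ← sq_abs (a - b)]
    have h6 : (4 * ε)⁻¹ * |a - b| ^ 2 + ε * (a + b) ^ 2 - |a - b| * (a + b) =
        ε * ((2 * ε)⁻¹ * |a - b| - (a + b)) ^ 2 := by
      field_simp
      ring
    have : 0 ≤ ε * ((2 * ε)⁻¹ * |a - b| - (a + b)) ^ 2 := by positivity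
    linarith
  have h7 : (4 * ε)⁻¹ * (a - b) ^ 2 ≤
      (4 * ε)⁻¹ * (a ^ 2 * (Real.log (a ^ 2) - Real.log (b ^ 2)) - a ^ 2 + b ^ 2) :=
    mul_le_mul_of_nonneg_left h2 (by positivity)
  have h8 : ε * (a + b) ^ 2 ≤ 2 * ε * (a ^ 2 + b ^ 2) := by
    nlinarith [mul_nonneg hε.le (sq_nonneg (a - b))]
  linarith

/-- The relative entropy of `κ` with respect to `l` on the partition into cells of
generation `k`. -/
noncomputable def cellDiv (κ l : Measure (Euc d)) (θ : Euc d) (k : ℕ) : ℝ :=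
  ∑ c ∈ cellBox d k,
    cellMass κ θ k c * (Real.log (cellMass κ θ k c) - Real.log (cellMass l θ k c))

/-- The total variation distance, seen at the resolution of generation `k + m`, between the
conditional measures of `κ` and `l` on the generation-`k` cell `c`. -/
noncomputable def cellTV (κ l : Measure (Euc d)) (θ : Euc d) (k m : ℕ) (c : Fin d → ℤ) : ℝ :=
  ∑ e ∈ cellBox d (k + m) with par m e = c,
    |cellMass κ θ (k + m) e / cellMass κ θ k c - cellMass l θ (k + m) e / cellMass l θ k c|

variable {κ l : Measure (Euc d)} [IsProbabilityMeasure κ] [IsProbabilityMeasure l]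

lemma cellTV_nonneg (θ : Euc d) (k m : ℕ) (c : Fin d → ℤ) : 0 ≤ cellTV κ l θ k m c :=
  Finset.sum_nonneg fun _ _ => abs_nonneg _

/-- The mean conditional total variation is controlled by the increment of relative entropy. -/
lemma sum_cellTV_le (hκ : κ (ball (0 : Euc d) 1)ᶜ = 0) (hl : l (ball (0 : Euc d) 1)ᶜ = 0)
    {θ : Euc d} (hθ : θ ∈ shifts d) (k m : ℕ)
    (hac : ∀ e, cellMass l θ (k + m) e = 0 → cellMass κ θ (k + m) e = 0) {ε : ℝ} (hε : 0 < ε) :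
    ∑ c ∈ cellBox d k, cellMass κ θ k c * cellTV κ l θ k m c ≤
      4 * ε + (4 * ε)⁻¹ * (cellDiv κ l θ (k + m) - cellDiv κ l θ k) := by
  -- `q e` is the mass of `e` after redistributing `κ` inside generation-`k` cells as `l` does
  set q : (Fin d → ℤ) → ℝ := fun e =>
    cellMass l θ (k + m) e * (cellMass κ θ k (par m e) / cellMass l θ k (par m e)) with hq
  have hq0 : ∀ e, 0 ≤ q e := fun e => mul_nonneg (cellMass_nonneg _ _ _)
    (div_nonneg (cellMass_nonneg _ _ _) (cellMass_nonneg _ _ _))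
  have hqsum : ∑ e ∈ cellBox d (k + m), q e ≤ 1 := by
    rw [hq, sum_par hl hθ k m (fun c => cellMass κ θ k c / cellMass l θ k c),
      ← sum_cellMass hκ hθ k]
    refine Finset.sum_le_sum fun c _ => ?_
    by_cases h0 : cellMass l θ k c = 0
    · rw [h0, zero_mul]
      exact cellMass_nonneg _ _ _
    · exact le_of_eq (by field_simp)
  have hpsum := sum_cellMass hκ hθ (k + m)
  have hdiv := sum_par hκ hθ k m
    (fun c => Real.log (cellMass κ θ k c) - Real.log (cellMass l θ k c))
  have step1 : ∑ c ∈ cellBox d k, cellMass κ θ k c * cellTV κ l θ k m c ≤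
      ∑ e ∈ cellBox d (k + m), |cellMass κ θ (k + m) e - q e| := by
    rw [← Finset.sum_fiberwise_of_maps_to (g := par m) (t := cellBox d k)
      (fun e he => par_mem_cellBox he)]
    refine Finset.sum_le_sum fun c _ => ?_
    rw [cellTV, Finset.mul_sum]
    refine Finset.sum_le_sum fun e he => ?_
    have he := (Finset.mem_filter.1 he).2
    by_cases h0 : cellMass κ θ k c = 0
    · rw [h0, zero_mul]
      exact abs_nonneg _
    · nth_rewrite 1 [← abs_of_nonneg (cellMass_nonneg (κ := κ) θ k c)]
      rw [← abs_mul, hq]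
      simp only [he]
      apply le_of_eq
      congr 1
      field_simp
  have step2 : ∀ e ∈ cellBox d (k + m), |cellMass κ θ (k + m) e - q e| ≤
      (4 * ε)⁻¹ * (cellMass κ θ (k + m) e *
          (Real.log (cellMass κ θ (k + m) e) - Real.log (cellMass l θ (k + m) e)) -
        cellMass κ θ (k + m) e *
          (Real.log (cellMass κ θ k (par m e)) - Real.log (cellMass l θ k (par m e))) -
        cellMass κ θ (k + m) e + q e) + 2 * ε * (cellMass κ θ (k + m) e + q e) := by
    intro e _
    rcases (cellMass_nonneg (κ := κ) θ (k + m) e).eq_or_lt with h0 | h0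
    · rw [← h0, zero_sub, abs_neg, abs_of_nonneg (hq0 e)]
      have : 0 ≤ (4 * ε)⁻¹ + 2 * ε - 1 := by
        have : (4 * ε)⁻¹ + 2 * ε - 1 = ε * (((2 * ε)⁻¹ - 1) ^ 2 + 1) := by
          field_simp; ring
        rw [this]; positivity
      nlinarith [mul_nonneg this (hq0 e)]
    · have l0 : 0 < cellMass l θ (k + m) e :=
        lt_of_le_of_ne (cellMass_nonneg _ _ _) fun h => h0.ne' (hac e h.symm)
      have kp : 0 < cellMass κ θ k (par m e) := h0.trans_le (cellMass_le_par _ _ _ _)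
      have lp : 0 < cellMass l θ k (par m e) := l0.trans_le (cellMass_le_par _ _ _ _)
      have hqe : 0 < q e := by simp only [hq]; positivity
      have := abs_sub_le_entropy h0 hqe hε
      have hlog : Real.log (q e) = Real.log (cellMass l θ (k + m) e) +
          (Real.log (cellMass κ θ k (par m e)) - Real.log (cellMass l θ k (par m e))) := by
        simp only [hq]
        rw [Real.log_mul l0.ne' (by positivity), Real.log_div kp.ne' lp.ne']
      rw [hlog] at this
      refine this.trans (le_of_eq ?_)
      ring
  refine step1.trans ((Finset.sum_le_sum step2).trans ?_)
  rw [Finset.sum_add_distrib, ← Finset.mul_sum, ← Finset.mul_sum, Finset.sum_add_distrib,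
    Finset.sum_add_distrib, Finset.sum_sub_distrib, Finset.sum_sub_distrib, hdiv, hpsum]
  have e4 : 0 < (4 * ε)⁻¹ := by positivity
  simp only [cellDiv]
  nlinarith [mul_nonneg e4.le (sub_nonneg.2 hqsum)]

lemma measureReal_preimage_cell (hκ : κ (ball (0 : Euc d) 1)ᶜ = 0) {θ : Euc d}
    (hθ : θ ∈ shifts d) (k : ℕ) (J : Set (Fin d → ℤ)) :
    κ.real (cell θ k ⁻¹' J) =
      ∑ e ∈ cellBox d k, cellMass κ θ k e * J.indicator (fun _ => (1 : ℝ)) e := by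
  rw [← integral_cell hκ hθ k, ← integral_indicator_one (measurable_cell θ k (.of_discrete))]
  rfl

/-- Unions of cells of generation `k + m` inside a generation-`k` cell have nearly the same
conditional `κ`- and `l`-masses. -/
lemma abs_preimage_cell_le (hκ : κ (ball (0 : Euc d) 1)ᶜ = 0) (hl : l (ball (0 : Euc d) 1)ᶜ = 0)
    {θ : Euc d} (hθ : θ ∈ shifts d) (k m : ℕ) (c : Fin d → ℤ) (J : Set (Fin d → ℤ))
    (hJ : ∀ e ∈ J, par m e = c) :
    |κ.real (cell θ (k + m) ⁻¹' J) / cellMass κ θ k c -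
      l.real (cell θ (k + m) ⁻¹' J) / cellMass l θ k c| ≤ cellTV κ l θ k m c := by
  rw [measureReal_preimage_cell hκ hθ, measureReal_preimage_cell hl hθ, Finset.sum_div,
    Finset.sum_div, ← Finset.sum_sub_distrib, cellTV, Finset.sum_filter]
  refine (Finset.abs_sum_le_sum_abs _ _).trans (Finset.sum_le_sum fun e _ => ?_)
  by_cases he : e ∈ J
  · simp [he, hJ e he]
  · simp only [he, not_false_eq_true, indicator_of_notMem, mul_zero, zero_div, sub_zero, abs_zero]
    split_ifs
    · exact abs_nonneg _
    · exact le_rfl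

lemma resc_apply (κ : Measure (Euc d)) (y : Euc d) (t : ℝ) {A : Set (Euc d)}
    (hA : MeasurableSet A) :
    resc κ y t A = (κ (closedBall y ((2 : ℝ) ^ (-t))))⁻¹ *
      κ ((fun z => (2 : ℝ) ^ t • (z - y)) ⁻¹' A ∩ closedBall y ((2 : ℝ) ^ (-t))) := by
  have hf : Measurable (fun z : Euc d => (2 : ℝ) ^ t • (z - y)) := by fun_prop
  rw [resc, Measure.smul_apply, smul_eq_mul, Measure.restrict_apply hA,
    Measure.map_apply hf (hA.inter measurableSet_closedBall), preimage_inter]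
  congr 3
  ext z
  have ht : (0 : ℝ) < 2 ^ t := by positivity
  rw [mem_preimage, mem_closedBall, mem_closedBall, dist_zero_right, norm_smul, Real.norm_eq_abs,
    abs_of_pos ht, dist_eq_norm, Real.rpow_neg (by norm_num), ← one_div, le_div_iff₀ ht, mul_comm]

lemma rescPM_real (y : Euc d) (t : ℝ) (hpos : 0 < κ.real (closedBall y ((2 : ℝ) ^ (-t))))
    {A : Set (Euc d)} (hA : MeasurableSet A) :
    (rescPM κ y t).toMeasure.real A =
      κ.real ((fun z => (2 : ℝ) ^ t • (z - y)) ⁻¹' A ∩ closedBall y ((2 : ℝ) ^ (-t))) /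
        κ.real (closedBall y ((2 : ℝ) ^ (-t))) := by
  have hne : κ (closedBall y ((2 : ℝ) ^ (-t))) ≠ 0 := by
    intro h
    simp [measureReal_def, h] at hpos
  have hprob : IsProbabilityMeasure (resc κ y t) := by
    constructor
    rw [resc_apply κ y t MeasurableSet.univ]
    simp only [preimage_univ, univ_inter]
    exact ENNReal.inv_mul_cancel hne (measure_ne_top _ _)
  have : (rescPM κ y t).toMeasure = resc κ y t := by
    have h : rescPM κ y t = ⟨resc κ y t, hprob⟩ := dif_pos hprob
    rw [h]
    rfl
  rw [this, measureReal_def, resc_apply κ y t hA, ENNReal.toReal_mul, ENNReal.toReal_inv,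
    measureReal_def, measureReal_def, div_eq_inv_mul]

end SceneryProof

/-! ### Comparing magnifications inside a cell -/

section SceneryProof

set_option linter.unusedSectionVars false

variable {d : ℕ} {κ l : Measure (Euc d)} [IsProbabilityMeasure κ] [IsProbabilityMeasure l]

/-- The `κ`-mass of the ball of radius `2⁻ᵗ` about `y`. -/
noncomputable def ballMass (κ : Measure (Euc d)) (y : Euc d) (t : ℝ) : ℝ :=
  κ.real (closedBall y ((2 : ℝ) ^ (-t)))

lemma ballMass_antitone (y : Euc d) : Antitone (ballMass κ y) := fun a b hab =>
  measureReal_mono (closedBall_subset_closedBall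
    (Real.rpow_le_rpow_of_exponent_le (by norm_num) (by linarith)))

lemma cellMass_le_ballMass (θ : Euc d) (k : ℕ) (y : Euc d) {t : ℝ} (ht : t ≤ k) :
    cellMass κ θ k (cell θ k y) ≤ ballMass κ y t := by
  refine le_trans (measureReal_mono ?_) (ballMass_antitone y ht)
  intro z hz
  rw [mem_closedBall, Real.rpow_neg (by norm_num), Real.rpow_natCast]
  exact dist_le_of_cell_eq hz

lemma ratio_le {x X u U e : ℝ} (hx0 : 0 ≤ x) (hxX : x ≤ X) (hX0 : 0 < X) (hU0 : 0 < U)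
    (he : 0 ≤ e) (hx : x ≤ u + e) (hU : U ≤ X + e) : x / X ≤ u / U + 2 * e / U := by
  have hq1 : x / X ≤ 1 := (div_le_one hX0).2 hxX
  have hq0 : 0 ≤ x / X := by positivity
  have hq2 : x / X * X = x := by field_simp
  rw [← add_div, le_div_iff₀ hU0]
  have h1 : x / X * U ≤ x / X * (X + e) := mul_le_mul_of_nonneg_left hU hq0
  have h2 : x / X * e ≤ 1 * e := mul_le_mul_of_nonneg_right hq1 he
  linarith

set_option maxHeartbeats 800000 in
/-- At a point `y` lying well inside its generation-`k` cell, the magnifications of `κ` and `l` at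
scales comparable to the cell are close if the conditional measures on the cell are, up to the mass
of an annulus around the boundary of the window. -/
lemma levyProkhorov_resc_le (hκ : κ (ball (0 : Euc d) 1)ᶜ = 0) (hl : l (ball (0 : Euc d) 1)ᶜ = 0)
    {θ : Euc d} (hθ : θ ∈ shifts d) (k m : ℕ) (y : Euc d)
    (hcell : ∀ z ∈ closedBall y (((2 : ℝ) ^ (k + 3))⁻¹), cell θ k z = cell θ k y)
    (hκpos : 0 < cellMass κ θ (k + 5) (cell θ (k + 5) y))
    (hlpos : 0 < cellMass l θ (k + 5) (cell θ (k + 5) y))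
    {τ : ℝ} (hτ0 : 0 < τ) (hτ1 : τ ≤ 1) (hm1 : 32 * ((2 : ℝ) ^ m)⁻¹ ≤ 1 - (2 : ℝ) ^ (-τ))
    (hm2 : 32 * ((2 : ℝ) ^ m)⁻¹ ≤ τ)
    {t : ℝ} (ht1 : k + 4 ≤ t) (ht2 : t ≤ k + 5) :
    levyProkhorovDist (rescPM l y t).toMeasure (rescPM κ y t).toMeasure ≤
      τ + 2 * ((ballMass κ y (t - τ) - ballMass κ y (t + τ)) / cellMass κ θ k (cell θ k y) +
        cellTV κ l θ k m (cell θ k y)) *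
        (cellMass κ θ k (cell θ k y) / cellMass κ θ (k + 5) (cell θ (k + 5) y)) := by
  have ht2' : t ≤ ((k + 5 : ℕ) : ℝ) := by push_cast; exact ht2
  set c := cell θ k y with hc
  set K := cellMass κ θ k c with hK
  set L := cellMass l θ k c with hL
  set E := cellMass κ θ (k + 5) (cell θ (k + 5) y) with hE
  set Δ := cellTV κ l θ k m c with hΔ
  set a := (ballMass κ y (t - τ) - ballMass κ y (t + τ)) / K with ha
  have hEK : E ≤ K := by
    have := cellMass_le_par (κ := κ) θ k 5 (cell θ (k + 5) y)
    rwa [par_cell] at this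
  have hKpos : 0 < K := hκpos.trans_le hEK
  have hLpos : 0 < L := by
    have := cellMass_le_par (κ := l) θ k 5 (cell θ (k + 5) y)
    rw [par_cell] at this
    exact hlpos.trans_le this
  have hEB : E ≤ ballMass κ y t := cellMass_le_ballMass θ (k + 5) y ht2'
  have hBκ : 0 < ballMass κ y t := hκpos.trans_le hEB
  have hBl : 0 < ballMass l y t := hlpos.trans_le (cellMass_le_ballMass θ (k + 5) y ht2')
  have hΔ0 : 0 ≤ Δ := cellTV_nonneg _ _ _ _
  have ha0 : 0 ≤ a := div_nonneg (sub_nonneg.2 (ballMass_antitone y (by linarith))) hKpos.le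
  -- the radii
  set r := (2 : ℝ) ^ (-t) with hr
  set η := ((2 : ℝ) ^ (k + m))⁻¹ with hη
  have hr0 : 0 < r := by positivity
  have hηr : (2 : ℝ) ^ t * η ≤ 32 * ((2 : ℝ) ^ m)⁻¹ := by
    have h1 : (2 : ℝ) ^ t ≤ 2 ^ (k + 5) := by
      rw [← Real.rpow_natCast]
      exact Real.rpow_le_rpow_of_exponent_le (by norm_num) ht2'
    calc (2 : ℝ) ^ t * η ≤ 2 ^ (k + 5) * η := by gcongr
      _ = 32 * ((2 : ℝ) ^ m)⁻¹ := by
        rw [hη, pow_add, pow_add]; field_simp; norm_num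
  have hrt : r * (2 : ℝ) ^ t = 1 := by
    rw [hr, ← Real.rpow_add (by norm_num)]; simp
  have hη1 : η ≤ r * (1 - (2 : ℝ) ^ (-τ)) := by
    have : r * ((2 : ℝ) ^ t * η) ≤ r * (1 - (2 : ℝ) ^ (-τ)) :=
      mul_le_mul_of_nonneg_left (hηr.trans hm1) hr0.le
    rwa [← mul_assoc, hrt, one_mul] at this
  have hrp : (2 : ℝ) ^ (-(t + τ)) = r * (2 : ℝ) ^ (-τ) := by
    rw [hr, ← Real.rpow_add (by norm_num)]; ring_nf
  have hrm : (2 : ℝ) ^ (-(t - τ)) = r * (2 : ℝ) ^ τ := by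
    rw [hr, ← Real.rpow_add (by norm_num)]; ring_nf
  have hin : (2 : ℝ) ^ (-(t + τ)) + η ≤ r := by rw [hrp]; nlinarith
  have hout : r + η ≤ (2 : ℝ) ^ (-(t - τ)) := by
    rw [hrm]
    have hs : (2 : ℝ) ^ (-τ) * 2 ^ τ = 1 := by rw [← Real.rpow_add (by norm_num)]; simp
    have hs0 : (0 : ℝ) < 2 ^ (-τ) := by positivity
    have hs1 : (0 : ℝ) < 2 ^ τ := by positivity
    have : 2 ≤ (2 : ℝ) ^ (-τ) + 2 ^ τ := by
      nlinarith [sq_nonneg ((2 : ℝ) ^ (-τ) - 2 ^ τ)]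
    nlinarith
  have hbig : (2 : ℝ) ^ (-(t - τ)) ≤ ((2 : ℝ) ^ (k + 3))⁻¹ := by
    rw [← Real.rpow_natCast, ← Real.rpow_neg (by norm_num)]
    refine Real.rpow_le_rpow_of_exponent_le (by norm_num) ?_
    push_cast
    linarith
  have hηpos : 0 < η := by positivity
  -- cells of generation `k + m` meeting a subset of the window
  have hJ : ∀ S ⊆ closedBall y r, ∀ e ∈ cell θ (k + m) '' S, par m e = c := by
    rintro S hS _ ⟨w, hw, rfl⟩
    rw [par_cell]
    exact hcell w (closedBall_subset_closedBall (by linarith) (hS hw))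
  -- the window masses
  have hU : ballMass κ y t / K ≤ ballMass l y t / L + (a + Δ) := by
    set J := cell θ (k + m) '' closedBall y ((2 : ℝ) ^ (-(t + τ)))
    have h1 := (abs_le.1 (abs_preimage_cell_le hκ hl hθ k m c J
      (hJ _ (closedBall_subset_closedBall (by linarith))))).2
    have h2 : ballMass κ y (t + τ) ≤ κ.real (cell θ (k + m) ⁻¹' J) :=
      measureReal_mono (subset_preimage_image _ _)
    have h3 : l.real (cell θ (k + m) ⁻¹' J) ≤ ballMass l y t := by
      refine measureReal_mono ?_
      rintro z ⟨w, hw, hwz⟩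
      rw [mem_closedBall] at hw ⊢
      linarith [dist_triangle z w y, dist_le_of_cell_eq hwz.symm]
    have h4 : ballMass κ y t ≤ ballMass κ y (t - τ) := ballMass_antitone y (by linarith)
    have h5 := div_le_div_of_nonneg_right h2 hKpos.le
    have h6 := div_le_div_of_nonneg_right h3 hLpos.le
    have h7 := div_le_div_of_nonneg_right h4 hKpos.le
    have h8 : a = ballMass κ y (t - τ) / K - ballMass κ y (t + τ) / K := by rw [ha, sub_div]
    linarith
  have hR0 : 0 ≤ 2 * (a + Δ) * (K / E) := by positivity
  refine levyProkhorovDist_le_of_forall_le _ _ (by linarith) fun ε A hε hA => ?_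
  have hε0 : 0 ≤ ε := by linarith
  set f : Euc d → Euc d := fun z => (2 : ℝ) ^ t • (z - y) with hf
  set A₁ := f ⁻¹' A ∩ closedBall y r with hA₁
  set A₂ := f ⁻¹' (thickening ε A) ∩ closedBall y r with hA₂
  have hX : l.real A₁ / L ≤ κ.real A₂ / K + (a + Δ) := by
    set J := cell θ (k + m) '' A₁
    have h1 := (abs_le.1 (abs_preimage_cell_le hκ hl hθ k m c J
      (hJ _ inter_subset_right))).1
    have h2 : l.real A₁ ≤ l.real (cell θ (k + m) ⁻¹' J) :=
      measureReal_mono (subset_preimage_image _ _)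
    have h3 : κ.real (cell θ (k + m) ⁻¹' J) ≤
        κ.real A₂ + (ballMass κ y (t - τ) - ballMass κ y (t + τ)) := by
      have h4 : cell θ (k + m) ⁻¹' J ⊆ A₂ ∪
          (closedBall y ((2 : ℝ) ^ (-(t - τ))) \ closedBall y ((2 : ℝ) ^ (-(t + τ)))) := by
        rintro z ⟨w, ⟨hwA, hw⟩, hwz⟩
        have hzw := dist_le_of_cell_eq hwz.symm
        rw [mem_closedBall] at hw
        have hzy : dist z y ≤ r + η := by linarith [dist_triangle z w y]
        by_cases hzr : z ∈ closedBall y r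
        · left
          refine ⟨?_, hzr⟩
          rw [mem_preimage, mem_thickening_iff]
          refine ⟨f w, hwA, ?_⟩
          have : dist (f z) (f w) = (2 : ℝ) ^ t * dist z w := by
            rw [hf]
            simp only [dist_smul₀, dist_sub_right, Real.norm_eq_abs]
            rw [abs_of_pos (by positivity)]
          rw [this]
          have : (2 : ℝ) ^ t * dist z w ≤ 2 ^ t * η := by gcongr
          linarith
        · right
          refine ⟨by rw [mem_closedBall]; linarith, fun h => hzr ?_⟩
          exact closedBall_subset_closedBall (by linarith) h
      refine (measureReal_mono h4).trans ((measureReal_union_le _ _).trans ?_)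
      rw [measureReal_sdiff (closedBall_subset_closedBall (by linarith)) measurableSet_closedBall]
      exact le_rfl
    have h5 := div_le_div_of_nonneg_right h3 hKpos.le
    have h6 := div_le_div_of_nonneg_right h2 hLpos.le
    rw [add_div] at h5
    linarith
  have hAB : l.real A₁ ≤ ballMass l y t := measureReal_mono inter_subset_right
  have hfin : l.real A₁ / ballMass l y t ≤ κ.real A₂ / ballMass κ y t + ε := by
    have e1 : l.real A₁ / ballMass l y t = (l.real A₁ / L) / (ballMass l y t / L) := by
      field_simp
    have e2 : κ.real A₂ / ballMass κ y t = (κ.real A₂ / K) / (ballMass κ y t / K) := by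
      field_simp
    have hxX := div_le_div_of_nonneg_right hAB hLpos.le
    have hX0 : 0 < ballMass l y t / L := by positivity
    have hU0 : 0 < ballMass κ y t / K := by positivity
    have hx0 : 0 ≤ l.real A₁ / L := by positivity
    have hRU : 2 * (a + Δ) / (ballMass κ y t / K) ≤ 2 * (a + Δ) * (K / E) := by
      rw [div_div_eq_mul_div, mul_div_assoc]
      gcongr
    rw [e1, e2]
    have := ratio_le hx0 hxX hX0 hU0 (by positivity : 0 ≤ a + Δ) hX hU
    linarith
  have hm := rescPM_real (κ := l) y t hBl hA
  have hm' := rescPM_real (κ := κ) y t hBκ (isOpen_thickening (δ := ε) (E := A)).measurableSet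
  have hmain : (rescPM l y t).toMeasure.real A ≤
      (rescPM κ y t).toMeasure.real (thickening ε A) + ε := by
    rw [hm, hm']; exact hfin
  rw [← ENNReal.ofReal_toReal (measure_ne_top (rescPM l y t).toMeasure A),
    ← ENNReal.ofReal_toReal (measure_ne_top (rescPM κ y t).toMeasure (thickening ε A)),
    ← ENNReal.ofReal_add ENNReal.toReal_nonneg hε0]
  exact ENNReal.ofReal_le_ofReal hmain

end SceneryProof

/-! ### Averaging over scales -/

section SceneryProof

set_option linter.unusedSectionVars false

variable {d : ℕ} {κ l : Measure (Euc d)} [IsProbabilityMeasure κ] [IsProbabilityMeasure l]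

/-- Annuli carry little mass on average over the scale: the integral of the increments of a bounded
monotone function telescopes. -/
lemma integral_antitone_sub_le {φ : ℝ → ℝ} (hφ : Antitone φ) (h0 : ∀ t, 0 ≤ φ t) {A τ M : ℝ}
    (hτ0 : 0 ≤ τ) (hM : ∀ t, A - τ ≤ t → φ t ≤ M) :
    ∫ t in A..(A + 1), (φ (t - τ) - φ (t + τ)) ≤ 2 * τ * M := by
  have hi : ∀ a b, IntervalIntegrable φ volume a b := fun a b => hφ.intervalIntegrable
  have hm : Antitone fun t => φ (t - τ) := fun a b hab => hφ (by linarith)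
  have hp : Antitone fun t => φ (t + τ) := fun a b hab => hφ (by linarith)
  rw [intervalIntegral.integral_sub hm.intervalIntegrable hp.intervalIntegrable,
    intervalIntegral.integral_comp_sub_right, intervalIntegral.integral_comp_add_right,
    intervalIntegral.integral_interval_sub_interval_comm (hi _ _) (hi _ _) (hi _ _)]
  have h1 : ∫ t in (A - τ)..(A + τ), φ t ≤ ∫ _ in (A - τ)..(A + τ), M :=
    intervalIntegral.integral_mono_on (by linarith) (hi _ _) (by simp)
      fun t ht => hM t ht.1
  have h2 : 0 ≤ ∫ t in (A + 1 - τ)..(A + 1 + τ), φ t :=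
    intervalIntegral.integral_nonneg (by linarith) fun t _ => h0 t
  rw [intervalIntegral.integral_const, smul_eq_mul] at h1
  linarith

/-- Bounding a time average by bounds over unit windows; no measurability of `f` is assumed, the
integral of a non-integrable function being `0`. -/
lemma setIntegral_Icc_le {f : ℝ → ℝ} (hf0 : ∀ t, 0 ≤ f t) (hf1 : ∀ t, f t ≤ 1) (n : ℕ)
    (g : ℕ → ℝ → ℝ) (B : ℕ → ℝ)
    (hg : ∀ k : ℕ, IntervalIntegrable (g k) volume (k + 4) (k + 5))
    (hfg : ∀ k : ℕ, ∀ t : ℝ, k + 4 ≤ t → t ≤ k + 5 → f t ≤ g k t)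
    (hB : ∀ k : ℕ, ∫ t in ((k : ℝ) + 4)..(k + 5), g k t ≤ B k) :
    ∫ t in Icc (1 : ℝ) n, f t ≤ 4 + ∑ k ∈ Finset.range n, B k := by
  have hB0 : ∀ k, 0 ≤ B k := fun k => le_trans
    (intervalIntegral.integral_nonneg (by linarith) fun t ht =>
      (hf0 t).trans (hfg k t ht.1 ht.2)) (hB k)
  by_cases hint : IntegrableOn f (Icc (1 : ℝ) n)
  swap
  · rw [integral_undef hint]
    exact add_nonneg (by norm_num) (Finset.sum_nonneg fun k _ => hB0 k)
  set F : ℝ → ℝ := (Icc (1 : ℝ) n).indicator f with hF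
  have hFint : Integrable F := (integrable_indicator_iff measurableSet_Icc).2 hint
  have hF0 : ∀ t, 0 ≤ F t := fun t => indicator_nonneg (fun t _ => hf0 t) t
  have hFf : ∀ t, F t ≤ f t := fun t => indicator_le_self' (fun t _ => hf0 t) t
  have h1 : ∫ t in Icc (1 : ℝ) n, f t = ∫ t in (0 : ℝ)..(n + 4), F t := by
    rw [← integral_indicator measurableSet_Icc,
      intervalIntegral.integral_of_le (by positivity)]
    symm
    refine setIntegral_eq_integral_of_forall_compl_eq_zero fun t ht => ?_
    refine indicator_of_notMem (fun h => ht ⟨?_, ?_⟩) _ <;> linarith [h.1, h.2]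
  have h2 : ∫ t in (0 : ℝ)..(n + 4), F t =
      (∫ t in (0 : ℝ)..4, F t) + ∑ k ∈ Finset.range n, ∫ t in ((k : ℝ) + 4)..(k + 5), F t := by
    have := intervalIntegral.sum_integral_adjacent_intervals (f := F) (μ := volume)
      (a := fun k : ℕ => (k : ℝ) + 4) (n := n) (fun k _ => hFint.intervalIntegrable)
    have h3 : ∑ k ∈ Finset.range n, ∫ t in ((k : ℝ) + 4)..(k + 5), F t =
        ∫ t in (4 : ℝ)..(n + 4), F t := by
      have h0 : ((0 : ℕ) : ℝ) + 4 = 4 := by norm_num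
      rw [h0] at this
      rw [← this]
      refine Finset.sum_congr rfl fun k _ => ?_
      congr 1
      push_cast
      ring
    rw [h3, intervalIntegral.integral_add_adjacent_intervals hFint.intervalIntegrable
      hFint.intervalIntegrable]
  rw [h1, h2]
  refine add_le_add ?_ (Finset.sum_le_sum fun k _ => ?_)
  · have : ∫ t in (0 : ℝ)..4, F t ≤ ∫ _ in (0 : ℝ)..4, (1 : ℝ) :=
      intervalIntegral.integral_mono_on (by norm_num) hFint.intervalIntegrable (by simp)
        fun t _ => (hFf t).trans (hf1 t)
    simpa using this
  · refine le_trans ?_ (hB k)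
    exact intervalIntegral.integral_mono_on (by linarith) hFint.intervalIntegrable (hg k)
      fun t ht => (hFf t).trans (hfg k t ht.1 ht.2)

lemma levyProkhorovDist_le_one (P Q : ProbabilityMeasure (Euc d)) :
    levyProkhorovDist P.toMeasure Q.toMeasure ≤ 1 := by
  refine ENNReal.toReal_le_of_le_ofReal zero_le_one ?_
  refine (levyProkhorovEDist_le_max_measure_univ _ _).trans ?_
  simp

/-- The scenery comparison for two fixed measures, in terms of conditional total variations. -/
lemma integral_scenery_le (hκ : κ (ball (0 : Euc d) 1)ᶜ = 0) (hl : l (ball (0 : Euc d) 1)ᶜ = 0)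
    (hac : ∀ θ ∈ shifts d, ∀ k e, cellMass l θ k e = 0 → cellMass κ θ k e = 0)
    {τ : ℝ} (hτ0 : 0 < τ) (hτ1 : τ ≤ 1) {m : ℕ}
    (hm1 : 32 * ((2 : ℝ) ^ m)⁻¹ ≤ 1 - (2 : ℝ) ^ (-τ)) (hm2 : 32 * ((2 : ℝ) ^ m)⁻¹ ≤ τ) (n : ℕ) :
    ∫ y, ((n : ℝ)⁻¹ * ∫ t in Icc (1 : ℝ) n,
        levyProkhorovDist (rescPM l y t).toMeasure (rescPM κ y t).toMeasure) ∂κ ≤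
      (n : ℝ)⁻¹ * (4 + ∑ k ∈ Finset.range n, ∑ θ ∈ shifts d,
        (τ + 2 * ((2 ^ 5) ^ d *
          (2 * τ + ∑ c ∈ cellBox d k, cellMass κ θ k c * cellTV κ l θ k m c)))) := by
  set F : Euc d → ℕ → (Fin d → ℤ) → ℝ := fun θ k e =>
    (2 * τ + cellTV κ l θ k m (par 5 e)) *
      (cellMass κ θ k (par 5 e) / cellMass κ θ (k + 5) e) with hF
  have hF0 : ∀ θ k e, 0 ≤ F θ k e := fun θ k e =>
    mul_nonneg (add_nonneg (by linarith) (cellTV_nonneg _ _ _ _))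
      (div_nonneg (cellMass_nonneg _ _ _) (cellMass_nonneg _ _ _))
  -- the pointwise bound
  have hpt : ∀ᵐ y ∂κ, ∫ t in Icc (1 : ℝ) n,
      levyProkhorovDist (rescPM l y t).toMeasure (rescPM κ y t).toMeasure ≤
      4 + ∑ k ∈ Finset.range n, ∑ θ ∈ shifts d, (τ + 2 * F θ k (cell θ (k + 5) y)) := by
    have hpos : ∀ᵐ y ∂κ, ∀ θ ∈ shifts d, ∀ k : ℕ,
        0 < cellMass κ θ (k + 5) (cell θ (k + 5) y) :=
      (Finset.eventually_all (shifts d)).2 fun θ _ => ae_all_iff.2 fun k => cellMass_pos_ae θ (k + 5)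
    filter_upwards [hpos] with y hy
    choose Θ hΘ hcell using fun k : ℕ => exists_shift k y
    set φ := ballMass κ y
    set K : ℕ → ℝ := fun k => cellMass κ (Θ k) k (cell (Θ k) k y) with hK
    set E : ℕ → ℝ := fun k => cellMass κ (Θ k) (k + 5) (cell (Θ k) (k + 5) y) with hE
    set V : ℕ → ℝ := fun k => cellTV κ l (Θ k) k m (cell (Θ k) k y) with hV
    have hE0 : ∀ k, 0 < E k := fun k => hy _ (hΘ k) k
    have hK0 : ∀ k, 0 < K k := fun k => by
      have := cellMass_le_par (κ := κ) (Θ k) k 5 (cell (Θ k) (k + 5) y)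
      rw [par_cell] at this
      exact (hE0 k).trans_le this
    have hφ : Antitone φ := ballMass_antitone y
    have hm : Antitone fun t => φ (t - τ) := fun a b hab => hφ (by linarith)
    have hp : Antitone fun t => φ (t + τ) := fun a b hab => hφ (by linarith)
    have hdi : ∀ a b, IntervalIntegrable (fun t => φ (t - τ) - φ (t + τ)) volume a b :=
      fun a b => hm.intervalIntegrable.sub hp.intervalIntegrable
    have hsum : ∀ k : ℕ, τ + 2 * F (Θ k) k (cell (Θ k) (k + 5) y) ≤
        ∑ θ ∈ shifts d, (τ + 2 * F θ k (cell θ (k + 5) y)) := fun k =>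
      Finset.single_le_sum (f := fun θ => τ + 2 * F θ k (cell θ (k + 5) y))
        (fun θ _ => by have := hF0 θ k (cell θ (k + 5) y); positivity) (hΘ k)
    have h1 : ∀ k, (fun t => τ + 2 * ((φ (t - τ) - φ (t + τ)) / K k + V k) * (K k / E k)) =
        fun t => (2 / E k) * (φ (t - τ) - φ (t + τ)) + (τ + 2 * V k * (K k / E k)) := by
      intro k
      funext t
      have := hK0 k
      have := hE0 k
      field_simp
      ring
    refine setIntegral_Icc_le (fun t => ENNReal.toReal_nonneg)
      (fun t => levyProkhorovDist_le_one _ _) n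
      (fun k t => τ + 2 * ((φ (t - τ) - φ (t + τ)) / K k + V k) * (K k / E k)) _
      (fun k => ?_) (fun k t ht1 ht2 => ?_) (fun k => le_trans ?_ (hsum k))
    · simp only [h1 k]
      exact ((hdi _ _).const_mul _).add intervalIntegrable_const
    · exact levyProkhorov_resc_le hκ hl (hΘ k) k m y (hcell k) (hE0 k)
        (lt_of_le_of_ne (cellMass_nonneg _ _ _) fun h => (hE0 k).ne' (hac _ (hΘ k) _ _ h.symm))
        hτ0 hτ1 hm1 hm2 ht1 ht2
    · have h2 := integral_antitone_sub_le (A := (k : ℝ) + 4) (M := K k) hφ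
        (fun t => measureReal_nonneg) hτ0.le (fun t ht => by
          refine measureReal_mono fun z hz => hcell k z (closedBall_subset_closedBall ?_ hz)
          rw [← Real.rpow_natCast, ← Real.rpow_neg (by norm_num)]
          refine Real.rpow_le_rpow_of_exponent_le (by norm_num) ?_
          push_cast
          linarith)
      rw [show (k : ℝ) + 4 + 1 = k + 5 by ring] at h2
      have hEk := hE0 k
      rw [h1 k, intervalIntegral.integral_add ((hdi _ _).const_mul _) (by simp),
        intervalIntegral.integral_const_mul, intervalIntegral.integral_const]
      have h3 : (2 / E k) * ∫ t in ((k : ℝ) + 4)..(k + 5), (φ (t - τ) - φ (t + τ)) ≤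
          (2 / E k) * (2 * τ * K k) := mul_le_mul_of_nonneg_left h2 (by positivity)
      have h4 : τ + 2 * F (Θ k) k (cell (Θ k) (k + 5) y) =
          (2 / E k) * (2 * τ * K k) + (τ + 2 * V k * (K k / E k)) := by
        simp only [hF, par_cell, hK, hE, hV]
        ring
      rw [h4]
      norm_num
      linarith
  have hint : ∀ k, ∀ θ ∈ shifts d, Integrable (fun y => τ + 2 * F θ k (cell θ (k + 5) y)) κ :=
    fun k θ hθ => integrable_cell hκ hθ (k + 5) fun e => τ + 2 * F θ k e
  have hint2 : ∀ k, Integrable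
      (fun y => ∑ θ ∈ shifts d, (τ + 2 * F θ k (cell θ (k + 5) y))) κ :=
    fun k => integrable_finsetSum _ fun θ hθ => hint k θ hθ
  have hint3 : Integrable (fun y => ∑ k ∈ Finset.range n,
      ∑ θ ∈ shifts d, (τ + 2 * F θ k (cell θ (k + 5) y))) κ :=
    integrable_finsetSum _ fun k _ => hint2 k
  have hstep : ∫ y, ((n : ℝ)⁻¹ * ∫ t in Icc (1 : ℝ) n,
        levyProkhorovDist (rescPM l y t).toMeasure (rescPM κ y t).toMeasure) ∂κ ≤
      ∫ y, ((n : ℝ)⁻¹ * (4 + ∑ k ∈ Finset.range n,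
        ∑ θ ∈ shifts d, (τ + 2 * F θ k (cell θ (k + 5) y)))) ∂κ := by
    refine integral_mono_of_nonneg (ae_of_all _ fun y => ?_)
      (((integrable_const _).add hint3).const_mul _) ?_
    · exact mul_nonneg (by positivity)
        (integral_nonneg fun t => ENNReal.toReal_nonneg)
    · filter_upwards [hpt] with y hy
      exact mul_le_mul_of_nonneg_left hy (by positivity)
  refine hstep.trans ?_
  rw [integral_const_mul, integral_add (integrable_const _) hint3,
    integral_finsetSum _ fun k _ => hint2 k]
  refine mul_le_mul_of_nonneg_left ?_ (by positivity)
  refine add_le_add (by simp) (Finset.sum_le_sum fun k _ => ?_)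
  rw [integral_finsetSum _ fun θ hθ => hint k θ hθ]
  refine Finset.sum_le_sum fun θ hθ => ?_
  rw [integral_add (integrable_const _) ((integrable_cell hκ hθ (k + 5) (F θ k)).const_mul _),
    integral_const_mul, integral_cell hκ hθ (k + 5) (F θ k)]
  have h5 := sum_ratio_le (κ := κ) k 5 θ (fun c => 2 * τ + cellTV κ l θ k m c)
    (fun c => add_nonneg (by linarith) (cellTV_nonneg _ _ _ _))
  have h6 : ∑ c ∈ cellBox d k, cellMass κ θ k c * (2 * τ + cellTV κ l θ k m c) =
      2 * τ + ∑ c ∈ cellBox d k, cellMass κ θ k c * cellTV κ l θ k m c := by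
    simp only [mul_add]
    rw [Finset.sum_add_distrib, ← Finset.sum_mul, sum_cellMass hκ hθ k, one_mul]
  rw [h6] at h5
  simp only [integral_const, probReal_univ, one_smul]
  have h7 : ∑ c ∈ cellBox d (k + 5), cellMass κ θ (k + 5) c * F θ k c ≤ _ := h5
  linarith

end SceneryProof

/-! ### Entropy and dimension -/

section SceneryProof

set_option linter.unusedSectionVars false

variable {d : ℕ}

/-- The Shannon entropy of `κ` on the partition into cells of generation `k`. -/
noncomputable def cellEnt (κ : Measure (Euc d)) (θ : Euc d) (k : ℕ) : ℝ :=
  ∑ c ∈ cellBox d k, cellMass κ θ k c * -Real.log (cellMass κ θ k c)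

variable {κ l : Measure (Euc d)} [IsProbabilityMeasure κ] [IsProbabilityMeasure l]

/-- The local dimension along the radii `C 2⁻ⁿ`. -/
lemma tendsto_log_ball {φ : ℝ → ℝ} {s : ℝ}
    (h : Tendsto (fun r : ℝ => Real.log (φ r) / Real.log r) (𝓝[>] (0 : ℝ)) (𝓝 s))
    {C : ℝ} (hC : 0 < C) :
    Tendsto (fun n : ℕ => -Real.log (φ (C * ((2 : ℝ) ^ n)⁻¹)) / n) atTop
      (𝓝 (s * Real.log 2)) := by
  have h0 : Tendsto (fun n : ℕ => C * ((2 : ℝ) ^ n)⁻¹) atTop (𝓝 0) := by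
    have := (tendsto_pow_atTop_nhds_zero_of_lt_one (r := (2 : ℝ)⁻¹) (by norm_num)
      (by norm_num)).const_mul C
    simpa [inv_pow] using this
  have h1 : Tendsto (fun n : ℕ => C * ((2 : ℝ) ^ n)⁻¹) atTop (𝓝[>] (0 : ℝ)) :=
    tendsto_nhdsWithin_iff.2 ⟨h0, Eventually.of_forall fun n => by
      show (0 : ℝ) < _
      positivity⟩
  have h2 : Tendsto (fun n : ℕ => -Real.log (C * ((2 : ℝ) ^ n)⁻¹) / n) atTop
      (𝓝 (Real.log 2)) := by
    have h3 : Tendsto (fun n : ℕ => Real.log 2 - Real.log C / n) atTop (𝓝 (Real.log 2 - 0)) :=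
      tendsto_const_nhds.sub (tendsto_const_div_atTop_nhds_zero_nat _)
    rw [sub_zero] at h3
    refine h3.congr' ?_
    filter_upwards [eventually_gt_atTop 0] with n hn
    rw [Real.log_mul hC.ne' (by positivity), Real.log_inv, Real.log_pow]
    have : (n : ℝ) ≠ 0 := by positivity
    field_simp
    ring
  refine ((h.comp h1).mul h2).congr' ?_
  filter_upwards [h0.eventually (gt_mem_nhds (zero_lt_one (α := ℝ)))] with n hn
  have : Real.log (C * ((2 : ℝ) ^ n)⁻¹) ≠ 0 := (Real.log_neg (by positivity) hn).ne
  simp only [Function.comp]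
  generalize C * ((2 : ℝ) ^ n)⁻¹ = r at this ⊢
  field_simp

/-- Gibbs' inequality, for weights that need not be normalised. -/
lemma cellEnt_le (hκ : κ (ball (0 : Euc d) 1)ᶜ = 0) {θ : Euc d} (hθ : θ ∈ shifts d) (k : ℕ)
    (w : (Fin d → ℤ) → ℝ) (hw : ∀ c, 0 < w c) :
    cellEnt κ θ k ≤ ∫ y, -Real.log (w (cell θ k y)) ∂κ + ∑ c ∈ cellBox d k, w c := by
  rw [integral_cell hκ hθ k fun c => -Real.log (w c), cellEnt, ← Finset.sum_add_distrib]
  refine Finset.sum_le_sum fun c _ => ?_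
  rcases (cellMass_nonneg (κ := κ) θ k c).eq_or_lt with h0 | h0
  · rw [← h0]
    simpa using (hw c).le
  · set p := cellMass κ θ k c
    have h1 := Real.log_le_sub_one_of_pos (x := w c / p) (div_pos (hw c) h0)
    rw [Real.log_div (hw c).ne' h0.ne'] at h1
    have h2 := mul_le_mul_of_nonneg_left h1 h0.le
    have h3 : p * (w c / p - 1) = w c - p := by field_simp
    rw [h3] at h2
    linarith

/-- The mass of a cell together with its neighbours, plus a small constant which keeps logarithms
bounded. -/
noncomputable def nbMass (κ : Measure (Euc d)) (θ : Euc d) (k : ℕ) (c : Fin d → ℤ) : ℝ :=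
  (∑ v ∈ Fintype.piFinset fun _ : Fin d => Finset.Icc (-1 : ℤ) 1, cellMass κ θ k (c + v)) +
    ((2 : ℝ) ^ ((k + 3) * d))⁻¹

lemma nbMass_ge (θ : Euc d) (k : ℕ) (c : Fin d → ℤ) :
    ((2 : ℝ) ^ ((k + 3) * d))⁻¹ ≤ nbMass κ θ k c :=
  le_add_of_nonneg_left (Finset.sum_nonneg fun _ _ => cellMass_nonneg _ _ _)

lemma sum_cellMass_le (θ : Euc d) (k : ℕ) (S : Finset (Fin d → ℤ)) :
    ∑ c ∈ S, cellMass κ θ k c ≤ 1 := by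
  unfold cellMass
  rw [← measureReal_biUnion_finset]
  · exact measureReal_le_one
  · intro a _ b _ hab
    exact Disjoint.preimage _ (disjoint_singleton.2 hab)
  · exact fun c _ => measurableSet_cell θ k c

lemma sum_nbMass_le (θ : Euc d) (k : ℕ) : ∑ c ∈ cellBox d k, nbMass κ θ k c ≤ 3 ^ d + 1 := by
  unfold nbMass
  rw [Finset.sum_add_distrib, Finset.sum_comm]
  refine add_le_add ?_ ?_
  · calc _ ≤ ∑ v ∈ Fintype.piFinset fun _ : Fin d => Finset.Icc (-1 : ℤ) 1, (1 : ℝ) := by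
          refine Finset.sum_le_sum fun v _ => ?_
          have := sum_cellMass_le (κ := κ) θ k ((cellBox d k).map (addRightEmbedding v))
          simpa using this
      _ = 3 ^ d := by simp
  · have hc : ((cellBox d k).card : ℝ) ≤ 2 ^ ((k + 3) * d) := by
      have : (cellBox d k).card ≤ 2 ^ ((k + 3) * d) := by
        rw [cellBox, Fintype.card_piFinset, pow_mul]
        simp only [Int.card_Icc, Finset.prod_const, Finset.card_univ, Fintype.card_fin]
        refine Nat.pow_le_pow_left ?_ d
        zify
        have : (1 : ℤ) ≤ 2 ^ k := one_le_pow₀ (by norm_num)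
        have h2 : (0 : ℤ) < 2 ^ (k + 1) := by positivity
        rw [Int.toNat_of_nonneg (by linarith)]
        rw [pow_succ, pow_add]
        linarith
      exact_mod_cast this
    rw [Finset.sum_const, nsmul_eq_mul, mul_inv_le_iff₀ (by positivity), one_mul]
    exact hc

lemma ball_le_nbMass (θ : Euc d) (k : ℕ) (y : Euc d) :
    κ.real (closedBall y (((2 : ℝ) ^ k)⁻¹)) ≤ nbMass κ θ k (cell θ k y) := by
  refine le_add_of_le_of_nonneg ?_ (by positivity)
  unfold cellMass
  refine le_trans (measureReal_mono ?_ (measure_ne_top _ _)) (measureReal_biUnion_finset_le _ _)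
  intro z hz
  simp only [mem_iUnion]
  refine ⟨cell θ k z - cell θ k y, ?_, ?_⟩
  · rw [Fintype.mem_piFinset]
    intro i
    have h1 : |z i - y i| ≤ ((2 : ℝ) ^ k)⁻¹ := by
      rw [← Real.dist_eq]
      exact (dist_le_pi_dist z y i).trans hz
    have hp : (0 : ℝ) < 2 ^ k := by positivity
    have h2 : (2 : ℝ) ^ k * |z i - y i| ≤ 1 := by
      have := mul_le_mul_of_nonneg_left h1 hp.le
      rwa [mul_inv_cancel₀ hp.ne'] at this
    have h3 : |(2 : ℝ) ^ k * (z i - θ i) - 2 ^ k * (y i - θ i)| ≤ 1 := by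
      rw [← mul_sub, abs_mul, abs_of_pos hp]
      simpa using h2
    have h4 := abs_le.1 h3
    simp only [Finset.mem_Icc, Pi.sub_apply, cell]
    set a := (2 : ℝ) ^ k * (z i - θ i)
    set b := (2 : ℝ) ^ k * (y i - θ i)
    have a1 := Int.floor_le a
    have a2 := Int.lt_floor_add_one a
    have b1 := Int.floor_le b
    have b2 := Int.lt_floor_add_one b
    constructor
    · have : (⌊b⌋ : ℝ) < ⌊a⌋ + 2 := by linarith
      have : ⌊b⌋ < ⌊a⌋ + 2 := by exact_mod_cast this
      omega
    · have : (⌊a⌋ : ℝ) < ⌊b⌋ + 2 := by linarith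
      have : ⌊a⌋ < ⌊b⌋ + 2 := by exact_mod_cast this
      omega
  · show cell θ k z = _
    simp

lemma cellMass_le_ball (θ : Euc d) (k : ℕ) (y : Euc d) :
    cellMass κ θ k (cell θ k y) ≤ κ.real (closedBall y (((2 : ℝ) ^ k)⁻¹)) :=
  measureReal_mono fun _ hz => dist_le_of_cell_eq hz

/-- The upper entropy bound: if the local dimension is `s` almost everywhere, entropy grows at rate at
most `s log 2`. -/
lemma cellEnt_eventually_le (hκ : κ (ball (0 : Euc d) 1)ᶜ = 0) {θ : Euc d} (hθ : θ ∈ shifts d)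
    {s : ℝ} (hs : 0 ≤ s)
    (hdim : ∀ᵐ x ∂κ, Tendsto (fun r : ℝ => Real.log (κ.real (closedBall x r)) / Real.log r)
      (𝓝[>] (0 : ℝ)) (𝓝 s)) {δ : ℝ} (hδ : 0 < δ) :
    ∀ᶠ n : ℕ in atTop, cellEnt κ θ n ≤ n * (s * Real.log 2 + δ) := by
  have hl2 := Real.log_pos (x := 2) (by norm_num)
  set S := s * Real.log 2 with hS
  have hS0 : 0 ≤ S := by positivity
  set f : ℕ → Euc d → ℝ := fun n y => max (-Real.log (nbMass κ θ n (cell θ n y)) / n) S with hf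
  have hw : ∀ n c, 0 < nbMass κ θ n c := fun n c =>
    lt_of_lt_of_le (by positivity) (nbMass_ge θ n c)
  have hmeas : ∀ n, Measurable (f n) := fun n =>
    measurable_comp_cell θ n fun c => max (-Real.log (nbMass κ θ n c) / n) S
  have hlim : Tendsto (fun n => ∫ y, f n y ∂κ) atTop (𝓝 (∫ _, S ∂κ)) := by
    refine tendsto_integral_of_dominated_convergence (fun _ => max (4 * d * Real.log 2) S)
      (fun n => (hmeas n).aestronglyMeasurable) (integrable_const _) (fun n => ?_) ?_
    · refine ae_of_all _ fun y => ?_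
      rw [Real.norm_of_nonneg (hS0.trans (le_max_right _ _))]
      refine max_le_max ?_ le_rfl
      rcases Nat.eq_zero_or_pos n with rfl | hn
      · simp only [Nat.cast_zero, div_zero]
        positivity
      have hn1 : (1 : ℝ) ≤ n := by exact_mod_cast hn
      rw [div_le_iff₀ (by positivity)]
      have h1 := Real.log_le_log (by positivity) (nbMass_ge (κ := κ) θ n (cell θ n y))
      rw [Real.log_inv, Real.log_pow] at h1
      push_cast at h1
      have h2 : (0 : ℝ) ≤ d * Real.log 2 := by positivity
      nlinarith
    · have hpos : ∀ᵐ y ∂κ, ∀ n : ℕ, 0 < cellMass κ θ n (cell θ n y) :=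
        ae_all_iff.2 fun n => cellMass_pos_ae θ n
      filter_upwards [hdim, hpos] with y hy hp
      have h1 := tendsto_log_ball hy one_pos
      simp only [one_mul] at h1
      have h2 : Tendsto (fun n : ℕ =>
          max (-Real.log (κ.real (closedBall y (((2 : ℝ) ^ n)⁻¹))) / n) S) atTop (𝓝 S) := by
        have := h1.max (tendsto_const_nhds (x := S))
        rwa [max_self] at this
      refine tendsto_of_tendsto_of_tendsto_of_le_of_le tendsto_const_nhds h2
        (fun n => le_max_right _ _) fun n => max_le_max ?_ le_rfl
      have h3 := Real.log_le_log ((hp n).trans_le (cellMass_le_ball θ n y))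
        (ball_le_nbMass θ n y)
      exact div_le_div_of_nonneg_right (neg_le_neg h3) (by positivity)
  rw [integral_const, probReal_univ, one_smul] at hlim
  have h3 : Tendsto (fun n : ℕ => ((3 : ℝ) ^ d + 1) / n) atTop (𝓝 0) :=
    tendsto_const_div_atTop_nhds_zero_nat _
  have h4 := hlim.add h3
  rw [add_zero] at h4
  filter_upwards [h4.eventually (gt_mem_nhds (show S < S + δ by linarith)), eventually_gt_atTop 0]
    with n hn hn0
  have hn1 : (0 : ℝ) < n := by exact_mod_cast hn0
  have h5 := (cellEnt_le hκ hθ n (nbMass κ θ n) (hw n)).trans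
    (add_le_add_right (sum_nbMass_le θ n) _)
  have h6 : ∫ y, -Real.log (nbMass κ θ n (cell θ n y)) ∂κ ≤ ∫ y, n * f n y ∂κ := by
    refine integral_mono (integrable_cell hκ hθ n fun c => -Real.log (nbMass κ θ n c))
      ((integrable_cell hκ hθ n fun c => max (-Real.log (nbMass κ θ n c) / n) S).const_mul _)
      fun y => ?_
    have := le_max_left (-Real.log (nbMass κ θ n (cell θ n y)) / n) S
    rwa [div_le_iff₀ hn1, mul_comm] at this
  rw [integral_const_mul] at h6
  have h7 := mul_lt_mul_of_pos_left hn hn1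
  have h8 : (n : ℝ) * (((3 : ℝ) ^ d + 1) / n) = 3 ^ d + 1 := by field_simp
  rw [mul_add, h8] at h7
  linarith

/-- Entropy per generation, with the information of each cell truncated at `S`. The truncation
makes it a bounded function of the measure. -/
noncomputable def truncEnt (κ : Measure (Euc d)) (θ : Euc d) (S : ℝ) (n : ℕ) : ℝ :=
  ∑ c ∈ cellBox d n, cellMass κ θ n c * min (-Real.log (cellMass κ θ n c) / n) S

lemma neg_log_cellMass_nonneg (θ : Euc d) (n : ℕ) (c : Fin d → ℤ) :
    0 ≤ -Real.log (cellMass κ θ n c) :=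
  neg_nonneg.2 (Real.log_nonpos (cellMass_nonneg _ _ _) (cellMass_le_one _ _ _))

lemma truncEnt_le_cellEnt (θ : Euc d) (S : ℝ) (n : ℕ) :
    n * truncEnt κ θ S n ≤ cellEnt κ θ n := by
  rw [truncEnt, cellEnt, Finset.mul_sum]
  refine Finset.sum_le_sum fun c _ => ?_
  have h0 := cellMass_nonneg (κ := κ) θ n c
  have hl := neg_log_cellMass_nonneg (κ := κ) θ n c
  rcases Nat.eq_zero_or_pos n with rfl | hn
  · simpa using mul_nonneg h0 hl
  have hn1 : (0 : ℝ) < n := by exact_mod_cast hn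
  have h1 : (n : ℝ) * min (-Real.log (cellMass κ θ n c) / n) S ≤ -Real.log (cellMass κ θ n c) := by
    have := mul_le_mul_of_nonneg_left (min_le_left (-Real.log (cellMass κ θ n c) / n) S) hn1.le
    rwa [mul_div_cancel₀ _ hn1.ne'] at this
  have := mul_le_mul_of_nonneg_left h1 h0
  linarith

lemma truncEnt_mem (hκ : κ (ball (0 : Euc d) 1)ᶜ = 0) {θ : Euc d} (hθ : θ ∈ shifts d) {S : ℝ}
    (hS : 0 ≤ S) (n : ℕ) : 0 ≤ truncEnt κ θ S n ∧ truncEnt κ θ S n ≤ S := by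
  constructor
  · refine Finset.sum_nonneg fun c _ => mul_nonneg (cellMass_nonneg _ _ _) (le_min ?_ hS)
    exact div_nonneg (neg_log_cellMass_nonneg _ _ _) (by positivity)
  · calc _ ≤ ∑ c ∈ cellBox d n, cellMass κ θ n c * S :=
          Finset.sum_le_sum fun c _ =>
            mul_le_mul_of_nonneg_left (min_le_right _ _) (cellMass_nonneg _ _ _)
      _ = S := by rw [← Finset.sum_mul, sum_cellMass hκ hθ, one_mul]

/-- The lower entropy bound for an image measure: it suffices that the map does not contract small
balls by more than a constant factor. -/
lemma tendsto_truncEnt {μ : Measure (Euc d)} [IsProbabilityMeasure μ] {h : Euc d → Euc d}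
    (hh : AEMeasurable h μ) [IsProbabilityMeasure (μ.map h)]
    (hκ : μ.map h (ball (0 : Euc d) 1)ᶜ = 0) {θ : Euc d} (hθ : θ ∈ shifts d)
    {s : ℝ} (hs : 0 ≤ s)
    (hdim : ∀ᵐ x ∂μ, Tendsto (fun r : ℝ => Real.log (μ.real (closedBall x r)) / Real.log r)
      (𝓝[>] (0 : ℝ)) (𝓝 s))
    (hexp : ∀ᵐ x ∂μ, ∃ C > 0, ∀ᶠ r in 𝓝[>] (0 : ℝ),
      (μ.map h).real (closedBall (h x) r) ≤ μ.real (closedBall x (C * r))) :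
    Tendsto (truncEnt (μ.map h) θ (s * Real.log 2)) atTop (𝓝 (s * Real.log 2)) := by
  have hl2 := Real.log_pos (x := 2) (by norm_num)
  set S := s * Real.log 2 with hS
  have hS0 : 0 ≤ S := by positivity
  set f : ℕ → Euc d → ℝ := fun n y =>
    min (-Real.log (cellMass (μ.map h) θ n (cell θ n y)) / n) S with hf
  have hmeas : ∀ n, Measurable (f n) := fun n =>
    measurable_comp_cell θ n fun c => min (-Real.log (cellMass (μ.map h) θ n c) / n) S
  have hEq : ∀ n, truncEnt (μ.map h) θ S n = ∫ x, f n (h x) ∂μ := fun n => by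
    rw [← integral_map hh (hmeas n).aestronglyMeasurable]
    exact (integral_cell hκ hθ n fun c => min (-Real.log (cellMass (μ.map h) θ n c) / n) S).symm
  have hlim : Tendsto (fun n => ∫ x, f n (h x) ∂μ) atTop (𝓝 (∫ _, S ∂μ)) := by
    refine tendsto_integral_of_dominated_convergence (fun _ => S)
      (fun n => ((hmeas n).comp_aemeasurable hh).aestronglyMeasurable) (integrable_const _)
      (fun n => ?_) ?_
    · refine ae_of_all _ fun x => ?_
      rw [Real.norm_of_nonneg (le_min (div_nonneg (neg_log_cellMass_nonneg _ _ _)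
        (by positivity)) hS0)]
      exact min_le_right _ _
    · have hpos : ∀ᵐ x ∂μ, ∀ n : ℕ, 0 < cellMass (μ.map h) θ n (cell θ n (h x)) :=
        ae_of_ae_map hh (ae_all_iff.2 fun n => cellMass_pos_ae θ n)
      filter_upwards [hdim, hexp, hpos] with x hx hex hp
      obtain ⟨C, hC, hev⟩ := hex
      have h1 := tendsto_log_ball hx hC
      have h2 : Tendsto (fun n : ℕ =>
          min (-Real.log (μ.real (closedBall x (C * ((2 : ℝ) ^ n)⁻¹))) / n) S) atTop (𝓝 S) := by
        have := h1.min (tendsto_const_nhds (x := S))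
        rwa [min_self] at this
      have h0 : Tendsto (fun n : ℕ => ((2 : ℝ) ^ n)⁻¹) atTop (𝓝[>] (0 : ℝ)) := by
        refine tendsto_nhdsWithin_iff.2 ⟨?_, Eventually.of_forall fun n => ?_⟩
        · simpa [inv_pow] using tendsto_pow_atTop_nhds_zero_of_lt_one (r := (2 : ℝ)⁻¹)
            (by norm_num) (by norm_num)
        · show (0 : ℝ) < _
          positivity
      refine tendsto_of_tendsto_of_tendsto_of_le_of_le' h2 tendsto_const_nhds ?_
        (Eventually.of_forall fun n => min_le_right _ _)
      filter_upwards [h0.eventually hev] with n hn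
      refine min_le_min ?_ le_rfl
      have h3 := Real.log_le_log (hp n) ((cellMass_le_ball θ n (h x)).trans hn)
      exact div_le_div_of_nonneg_right (neg_le_neg h3) (by positivity)
  rw [integral_const, probReal_univ, one_smul] at hlim
  exact hlim.congr fun n => (hEq n).symm

end SceneryProof

/-! ### Conformal images and mixtures -/

section SceneryProof

set_option linter.unusedSectionVars false

variable {d : ℕ}

/-- The inverse of a conformal map is Lipschitz at each point of the image: `f z` close to `f x` forces
`z` to be close to `x`, at a comparable scale. -/
lemma IsConformalMapOn.exists_dist_le {f : Euc d → Euc d}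
    (hf : IsConformalMapOn d f (ball 0 1)) {x : Euc d} (hx : x ∈ ball (0 : Euc d) 1) :
    ∃ C > 0, ∀ᶠ r in 𝓝[>] (0 : ℝ), ∀ z ∈ ball (0 : Euc d) 1,
      f z ∈ closedBall (f x) r → z ∈ closedBall x (C * r) := by
  obtain ⟨hinj, -, hdiff, hconf, C₀, α, hα, hold⟩ := hf
  have hU : ball (0 : Euc d) 1 ∈ 𝓝 x := isOpen_ball.mem_nhds hx
  have hcont : ContinuousAt (fderiv ℝ f) x := (hold.continuousOn hα).continuousAt hU
  have hstrict : HasStrictFDerivAt f (fderiv ℝ f x) x := by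
    refine hasStrictFDerivAt_of_hasFDerivAt_of_continuousAt ?_ hcont
    filter_upwards [hU] with z hz
    exact (hdiff z hz).hasFDerivAt
  have hdet : (fderiv ℝ f x).det ≠ 0 := by
    obtain ⟨c, hc, O, hO, h⟩ := hconf x hx
    have : (fderiv ℝ f x).det = LinearMap.det (c • O.mulVecLin) := by
      rw [← h]
    rw [this, LinearMap.det_smul]
    refine mul_ne_zero (pow_ne_zero _ hc.ne') ?_
    rw [← Matrix.toLin'_apply', LinearMap.det_toLin']
    intro h0
    have h1 := congrArg Matrix.det ((Matrix.mem_orthogonalGroup_iff _ _).1 hO)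
    simp [h0] at h1
  set L := ContinuousLinearMap.toContinuousLinearEquivOfDetNeZero (fderiv ℝ f x) hdet with hL
  have hs : HasStrictFDerivAt f (L : Euc d →L[ℝ] Euc d) x := by
    rw [hL, ContinuousLinearMap.coe_toContinuousLinearEquivOfDetNeZero]
    exact hstrict
  set g := hs.localInverse f L x with hg
  have hgx : g (f x) = x := hs.localInverse_apply_image
  have h1 : ∀ᶠ y in 𝓝 (f x), f (g y) = y := hs.eventually_right_inverse
  have h2 : ∀ᶠ y in 𝓝 (f x), g y ∈ ball (0 : Euc d) 1 :=
    hs.localInverse_tendsto.eventually hU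
  obtain ⟨C, hC, h3⟩ := (hs.to_localInverse.hasFDerivAt.isBigO_sub).exists_pos
  have h3 := h3.bound
  have hall := (h1.and (h2.and h3))
  obtain ⟨ρ, hρ, hball⟩ := Metric.eventually_nhds_iff.1 hall
  refine ⟨C, hC, ?_⟩
  filter_upwards [Ioo_mem_nhdsGT hρ] with r hr z hz hzr
  obtain ⟨e1, e2, e3⟩ := hball (lt_of_le_of_lt (mem_closedBall.1 hzr) hr.2)
  have e4 : g (f z) = z := hinj e2 hz e1
  rw [← hg, e4, hgx, ← dist_eq_norm, ← dist_eq_norm] at e3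
  exact e3.trans (mul_le_mul_of_nonneg_left hzr hC.le)

section Map

variable {μ : Measure (Euc d)} [IsProbabilityMeasure μ]

lemma IsConformalMapOn.continuousOn {f : Euc d → Euc d}
    (hf : IsConformalMapOn d f (ball 0 1)) : ContinuousOn f (ball 0 1) :=
  fun x hx => (hf.2.2.1 x hx).continuousAt.continuousWithinAt

lemma IsConformalMapOn.mapsTo {f : Euc d → Euc d}
    (hf : IsConformalMapOn d f (ball 0 1)) : MapsTo f (ball 0 1) (ball 0 1) :=
  fun _ hx => hf.2.1 (subset_closure (mem_image_of_mem f hx))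

lemma IsConformalMapOn.aemeasurable (hμ : μ (ball (0 : Euc d) 1)ᶜ = 0) {f : Euc d → Euc d}
    (hf : IsConformalMapOn d f (ball 0 1)) : AEMeasurable f μ := by
  have := hf.continuousOn.aemeasurable (μ := μ) measurableSet_ball
  rwa [Measure.restrict_eq_self_of_ae_mem (ae_mem_ball hμ)] at this

lemma IsConformalMapOn.map_ball_compl (hμ : μ (ball (0 : Euc d) 1)ᶜ = 0) {f : Euc d → Euc d}
    (hf : IsConformalMapOn d f (ball 0 1)) : μ.map f (ball (0 : Euc d) 1)ᶜ = 0 := by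
  rw [Measure.map_apply_of_aemeasurable (hf.aemeasurable hμ) measurableSet_ball.compl]
  exact measure_mono_null (fun x hx hb => hx (hf.mapsTo hb)) hμ

lemma IsConformalMapOn.map_closedBall_le (hμ : μ (ball (0 : Euc d) 1)ᶜ = 0) {f : Euc d → Euc d}
    (hf : IsConformalMapOn d f (ball 0 1)) :
    ∀ᵐ x ∂μ, ∃ C > 0, ∀ᶠ r in 𝓝[>] (0 : ℝ),
      (μ.map f).real (closedBall (f x) r) ≤ μ.real (closedBall x (C * r)) := by
  filter_upwards [ae_mem_ball hμ] with x hx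
  obtain ⟨C, hC, hev⟩ := hf.exists_dist_le hx
  refine ⟨C, hC, ?_⟩
  filter_upwards [hev] with r hr
  rw [measureReal_def, measureReal_def,
    Measure.map_apply_of_aemeasurable (hf.aemeasurable hμ) measurableSet_closedBall]
  refine ENNReal.toReal_mono (measure_ne_top _ _) (measure_mono_ae ?_)
  filter_upwards [ae_mem_ball hμ] with z hz hzr
  exact hr z hz hzr

instance (d : ℕ) : BorelSpace (ConfMaps d) := ⟨rfl⟩

/-- Taking image measures is lower semicontinuous on open sets, hence measurable: an open set is an
increasing union of sets that stay inside it under small perturbations of the map. -/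
lemma measurable_map_confMaps (hμ : μ (ball (0 : Euc d) 1)ᶜ = 0) :
    Measurable fun h : ConfMaps d => μ.map (UniformFun.toFun h.val) := by
  have hprob : ∀ h : ConfMaps d, IsProbabilityMeasure (μ.map (UniformFun.toFun h.val)) :=
    fun h => Measure.isProbabilityMeasure_map (h.2.aemeasurable hμ)
  refine Measurable.measure_of_isPiSystem_of_isProbabilityMeasure
    (S := {s : Set (Euc d) | IsOpen s}) (BorelSpace.measurable_eq (α := Euc d)) isPiSystem_isOpen fun G hG => ?_
  have hG : IsOpen G := hG
  refine LowerSemicontinuous.measurable fun h a ha => ?_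
  set f := UniformFun.toFun h.val with hf
  have hfm : AEMeasurable f μ := h.2.aemeasurable hμ
  -- `T j` consists of the points at distance at least `1/(j+1)` from the complement of `G`
  set T : ℕ → Set (Euc d) := fun j => (thickening (1 / ((j : ℝ) + 1)) Gᶜ)ᶜ with hT
  have hTm : ∀ j, MeasurableSet (T j) := fun j => isOpen_thickening.measurableSet.compl
  have hTmono : Monotone T := fun i j hij =>
    compl_subset_compl.2 (thickening_mono (Nat.one_div_le_one_div hij) _)
  have hTU : ⋃ j, T j = G := by
    ext y
    simp only [mem_iUnion, hT, mem_compl_iff, mem_thickening_iff, not_exists, not_and, not_lt]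
    constructor
    · rintro ⟨j, hj⟩
      by_contra hy
      have := hj y hy
      rw [dist_self] at this
      have : (0 : ℝ) < 1 / ((j : ℝ) + 1) := by positivity
      linarith
    · intro hy
      obtain ⟨ε, hε, hb⟩ := Metric.isOpen_iff.1 hG y hy
      obtain ⟨j, hj⟩ := exists_nat_one_div_lt hε
      refine ⟨j, fun z hz => ?_⟩
      by_contra hlt
      exact hz (hb (by rw [mem_ball']; linarith))
  have hsup : μ.map f G = ⨆ j, μ.map f (T j) := by
    rw [← hTU, hTmono.measure_iUnion]
  have ha' : a < ⨆ j, μ.map f (T j) := by rw [← hsup]; exact ha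
  obtain ⟨j, hj⟩ := lt_iSup_iff.1 ha'
  have hnb : ∀ᶠ g : ConfMaps d in 𝓝 h, ∀ x, dist (f x) (UniformFun.toFun g.val x) <
      1 / ((j : ℝ) + 1) := by
    have hb := (UniformFun.hasBasis_nhds_of_basis (Euc d) (Euc d) h.val
      Metric.uniformity_basis_dist).mem_of_mem (i := 1 / ((j : ℝ) + 1)) (by positivity)
    exact continuous_subtype_val.continuousAt.eventually hb
  filter_upwards [hnb] with g hg
  refine hj.trans_le ?_
  rw [Measure.map_apply_of_aemeasurable hfm (hTm j),
    Measure.map_apply_of_aemeasurable (g.2.aemeasurable hμ) hG.measurableSet]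
  refine measure_mono fun x hx => ?_
  by_contra hxG
  refine hx (mem_thickening_iff.2 ⟨UniformFun.toFun g.val x, hxG, hg x⟩)

end Map

section Bind

variable {H : Type*} [MeasurableSpace H] {ν : Measure H} [IsProbabilityMeasure ν]
  {κ : H → Measure (Euc d)} [∀ h, IsProbabilityMeasure (κ h)]

lemma isProbabilityMeasure_bind (hκm : Measurable κ) : IsProbabilityMeasure (ν.bind κ) :=
  ⟨by rw [Measure.bind_apply MeasurableSet.univ hκm.aemeasurable]; simp⟩

lemma bind_ball_compl (hκm : Measurable κ) (hκ : ∀ h, κ h (ball (0 : Euc d) 1)ᶜ = 0) :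
    ν.bind κ (ball (0 : Euc d) 1)ᶜ = 0 := by
  rw [Measure.bind_apply measurableSet_ball.compl hκm.aemeasurable]
  simp [hκ]

lemma measurable_cellMass (hκm : Measurable κ) (θ : Euc d) (k : ℕ) (c : Fin d → ℤ) :
    Measurable fun h => cellMass (κ h) θ k c :=
  ((Measure.measurable_coe (measurableSet_cell θ k c)).comp hκm).ennreal_toReal

lemma integrable_cellMass (hκm : Measurable κ) (θ : Euc d) (k : ℕ) (c : Fin d → ℤ) :
    Integrable (fun h => cellMass (κ h) θ k c) ν :=
  Integrable.of_bound (measurable_cellMass hκm θ k c).aestronglyMeasurable 1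
    (ae_of_all _ fun h => by
      rw [Real.norm_of_nonneg (cellMass_nonneg _ _ _)]
      exact cellMass_le_one _ _ _)

lemma cellMass_bind (hκm : Measurable κ) (θ : Euc d) (k : ℕ) (c : Fin d → ℤ) :
    cellMass (ν.bind κ) θ k c = ∫ h, cellMass (κ h) θ k c ∂ν := by
  simp only [cellMass, measureReal_def]
  rw [Measure.bind_apply (measurableSet_cell θ k c) hκm.aemeasurable, integral_toReal]
  · exact ((Measure.measurable_coe (measurableSet_cell θ k c)).comp hκm).aemeasurable
  · exact ae_of_all _ fun h => measure_lt_top _ _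

/-- Almost every component is absolutely continuous with respect to the mixture, on cells. -/
lemma cellMass_ac (hκm : Measurable κ) :
    ∀ᵐ h ∂ν, ∀ θ ∈ shifts d, ∀ k e, cellMass (ν.bind κ) θ k e = 0 → cellMass (κ h) θ k e = 0 := by
  refine (Finset.eventually_all (shifts d)).2 fun θ _ => ae_all_iff.2 fun k => ae_all_iff.2 fun e => ?_
  by_cases h0 : cellMass (ν.bind κ) θ k e = 0
  · rw [cellMass_bind hκm, integral_eq_zero_iff_of_nonneg (fun h => cellMass_nonneg _ _ _)
      (integrable_cellMass hκm θ k e)] at h0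
    filter_upwards [h0] with h hh _
    exact hh
  · exact ae_of_all _ fun h h1 => absurd h1 h0

lemma measurable_cellEnt (hκm : Measurable κ) (θ : Euc d) (k : ℕ) :
    Measurable fun h => cellEnt (κ h) θ k := by
  unfold cellEnt
  have := fun c => measurable_cellMass hκm θ k c
  fun_prop

lemma measurable_truncEnt (hκm : Measurable κ) (θ : Euc d) (S : ℝ) (k : ℕ) :
    Measurable fun h => truncEnt (κ h) θ S k := by
  unfold truncEnt
  have := fun c => measurable_cellMass hκm θ k c
  fun_prop

lemma integrable_cellEnt (hκm : Measurable κ) (θ : Euc d) (k : ℕ) :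
    Integrable (fun h => cellEnt (κ h) θ k) ν := by
  refine Integrable.of_bound (measurable_cellEnt hκm θ k).aestronglyMeasurable
    (∑ c ∈ cellBox d k, 1) (ae_of_all _ fun h => ?_)
  refine (norm_sum_le _ _).trans (Finset.sum_le_sum fun c _ => ?_)
  rcases (cellMass_nonneg (κ := κ h) θ k c).eq_or_lt with h0 | h0
  · rw [← h0]; simp
  · have := Real.abs_log_mul_self_lt _ h0 (cellMass_le_one θ k c)
    rw [mul_neg, norm_neg, Real.norm_eq_abs, mul_comm]
    exact this.le

lemma cellDiv_eq (θ : Euc d) (k : ℕ) (κ l : Measure (Euc d)) :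
    cellDiv κ l θ k = ∑ c ∈ cellBox d k, cellMass κ θ k c * -Real.log (cellMass l θ k c) -
      cellEnt κ θ k := by
  rw [cellDiv, cellEnt, ← Finset.sum_sub_distrib]
  refine Finset.sum_congr rfl fun c _ => ?_
  ring

lemma integrable_cellDiv (hκm : Measurable κ) (θ : Euc d) (k : ℕ) :
    Integrable (fun h => cellDiv (κ h) (ν.bind κ) θ k) ν := by
  simp only [cellDiv_eq]
  exact (integrable_finsetSum _ fun c _ => (integrable_cellMass hκm θ k c).mul_const _).sub
    (integrable_cellEnt hκm θ k)

/-- The mean relative entropy of the components with respect to the mixture is the entropy of the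
mixture minus the mean entropy of the components. -/
lemma integral_cellDiv (hκm : Measurable κ) (θ : Euc d) (k : ℕ) :
    ∫ h, cellDiv (κ h) (ν.bind κ) θ k ∂ν =
      cellEnt (ν.bind κ) θ k - ∫ h, cellEnt (κ h) θ k ∂ν := by
  simp only [cellDiv_eq]
  rw [integral_sub (integrable_finsetSum _ fun c _ => (integrable_cellMass hκm θ k c).mul_const _)
    (integrable_cellEnt hκm θ k), integral_finsetSum _ fun c _ =>
      (integrable_cellMass hκm θ k c).mul_const _]
  congr 1
  refine Finset.sum_congr rfl fun c _ => ?_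
  rw [integral_mul_const, ← cellMass_bind hκm]

end Bind

end SceneryProof

/-! ### Conclusion -/

section SceneryProof

set_option linter.unusedSectionVars false

variable {d : ℕ} {H : Type*} [MeasurableSpace H] {ν : Measure H} [IsProbabilityMeasure ν]
  {κ : H → Measure (Euc d)} [∀ h, IsProbabilityMeasure (κ h)]

/-- Increments over a fixed lag of a sequence with sublinear upper growth average to at most `0`. -/
lemma sum_increment_le {I : ℕ → ℝ} (hI : ∀ δ > 0, ∀ᶠ n : ℕ in atTop, I n ≤ δ * n) (m : ℕ)
    {δ : ℝ} (hδ : 0 < δ) :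
    ∀ᶠ n : ℕ in atTop, ∑ k ∈ Finset.range n, (I (k + m) - I k) ≤ δ * n := by
  have htel : ∀ n, ∑ k ∈ Finset.range n, (I (k + m) - I k) =
      ∑ j ∈ Finset.range m, I (n + j) - ∑ j ∈ Finset.range m, I j := by
    intro n
    have h1 := Finset.sum_range_add I n m
    have h2 := Finset.sum_range_add I m n
    rw [add_comm m n] at h2
    rw [Finset.sum_sub_distrib]
    simp only [add_comm _ m]
    linarith
  set δ' := δ / (4 * (m + 1)) with hδ'
  have hδ'0 : 0 < δ' := by positivity
  obtain ⟨N, hN⟩ := eventually_atTop.1 (hI δ' hδ'0)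
  have hc : ∀ᶠ n : ℕ in atTop, -∑ j ∈ Finset.range m, I j ≤ δ / 2 * n := by
    have := (tendsto_natCast_atTop_atTop (R := ℝ)).const_mul_atTop (half_pos hδ)
    exact this.eventually_ge_atTop _
  filter_upwards [hc, eventually_ge_atTop N, eventually_ge_atTop m] with n h1 h2 h3
  rw [htel]
  have h4 : ∑ j ∈ Finset.range m, I (n + j) ≤ ∑ j ∈ Finset.range m, δ' * (2 * n) := by
    refine Finset.sum_le_sum fun j hj => (hN (n + j) (by omega)).trans ?_
    refine mul_le_mul_of_nonneg_left ?_ hδ'0.le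
    have : n + j ≤ 2 * n := by have := Finset.mem_range.1 hj; omega
    exact_mod_cast this
  rw [Finset.sum_const, Finset.card_range, nsmul_eq_mul] at h4
  have h5 : (m : ℝ) * (δ' * (2 * n)) ≤ δ / 2 * n := by
    have : ((m : ℝ) + 1) * (δ' * (2 * n)) = δ / 2 * n := by
      rw [hδ']; field_simp; ring
    have h6 : 0 ≤ δ' * (2 * n) := by positivity
    linarith
  linarith

/-- For a fixed number of scales `n`: the mean scenery distance between the mixture and its
components is controlled by the increments of the mean relative entropy. -/
lemma integral_integral_scenery_le (hκm : Measurable κ)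
    (hκ : ∀ h, κ h (ball (0 : Euc d) 1)ᶜ = 0) {τ ε : ℝ} (hτ0 : 0 < τ) (hτ1 : τ ≤ 1) (hε : 0 < ε)
    {m : ℕ} (hm1 : 32 * ((2 : ℝ) ^ m)⁻¹ ≤ 1 - (2 : ℝ) ^ (-τ)) (hm2 : 32 * ((2 : ℝ) ^ m)⁻¹ ≤ τ)
    (n : ℕ) :
    ∫ h, (∫ y, ((n : ℝ)⁻¹ * ∫ t in Icc (1 : ℝ) n, levyProkhorovDist
        (rescPM (ν.bind κ) y t).toMeasure (rescPM (κ h) y t).toMeasure) ∂(κ h)) ∂ν ≤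
      (n : ℝ)⁻¹ * (4 + ∑ θ ∈ shifts d, (n * (τ + 2 * ((2 ^ 5) ^ d * (2 * τ + 4 * ε))) +
        2 * (2 ^ 5) ^ d * (4 * ε)⁻¹ * ∑ k ∈ Finset.range n,
          (∫ h, cellDiv (κ h) (ν.bind κ) θ (k + m) ∂ν - ∫ h, cellDiv (κ h) (ν.bind κ) θ k ∂ν))) := by
  have := isProbabilityMeasure_bind (ν := ν) hκm
  have hl := bind_ball_compl (ν := ν) hκm hκ
  set l := ν.bind κ
  set R : H → ℝ := fun h => (n : ℝ)⁻¹ * (4 + ∑ θ ∈ shifts d,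
    (n * (τ + 2 * ((2 ^ 5) ^ d * (2 * τ + 4 * ε))) +
        2 * (2 ^ 5) ^ d * (4 * ε)⁻¹ * ∑ k ∈ Finset.range n,
          (cellDiv (κ h) l θ (k + m) - cellDiv (κ h) l θ k))) with hR
  have hi1 : ∀ θ, ∀ k ∈ Finset.range n,
      Integrable (fun h => cellDiv (κ h) l θ (k + m) - cellDiv (κ h) l θ k) ν := fun θ k _ =>
    (integrable_cellDiv hκm θ (k + m)).sub (integrable_cellDiv hκm θ k)
  have hi2 : ∀ θ, Integrable (fun h => ∑ k ∈ Finset.range n,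
      (cellDiv (κ h) l θ (k + m) - cellDiv (κ h) l θ k)) ν := fun θ =>
    integrable_finsetSum _ (hi1 θ)
  have hi3 : ∀ θ ∈ shifts d, Integrable (fun h =>
      n * (τ + 2 * ((2 ^ 5) ^ d * (2 * τ + 4 * ε))) +
        2 * (2 ^ 5) ^ d * (4 * ε)⁻¹ * ∑ k ∈ Finset.range n,
          (cellDiv (κ h) l θ (k + m) - cellDiv (κ h) l θ k)) ν := fun θ _ =>
    (integrable_const _).add ((hi2 θ).const_mul _)
  have hi4 := integrable_finsetSum _ hi3
  have hstep : ∫ h, (∫ y, ((n : ℝ)⁻¹ * ∫ t in Icc (1 : ℝ) n, levyProkhorovDist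
        (rescPM l y t).toMeasure (rescPM (κ h) y t).toMeasure) ∂(κ h)) ∂ν ≤ ∫ h, R h ∂ν := by
    refine integral_mono_of_nonneg (ae_of_all _ fun h => ?_)
      (((integrable_const _).add hi4).const_mul _) ?_
    · exact integral_nonneg fun y => mul_nonneg (by positivity)
        (integral_nonneg fun t => ENNReal.toReal_nonneg)
    · filter_upwards [cellMass_ac hκm] with h hac
      refine (integral_scenery_le (hκ h) hl hac hτ0 hτ1 hm1 hm2 n).trans ?_
      refine mul_le_mul_of_nonneg_left (add_le_add le_rfl ?_) (by positivity)
      rw [Finset.sum_comm]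
      refine Finset.sum_le_sum fun θ hθ => ?_
      calc _ ≤ ∑ k ∈ Finset.range n, ((τ + 2 * ((2 ^ 5) ^ d * (2 * τ + 4 * ε))) +
            2 * (2 ^ 5) ^ d * (4 * ε)⁻¹ *
              (cellDiv (κ h) l θ (k + m) - cellDiv (κ h) l θ k)) := by
            refine Finset.sum_le_sum fun k _ => ?_
            have h1 := sum_cellTV_le (hκ h) hl hθ k m (hac θ hθ (k + m)) hε
            have h2 := mul_le_mul_of_nonneg_left h1 (show (0 : ℝ) ≤ 2 * (2 ^ 5) ^ d by positivity)
            linarith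
        _ = _ := by
            rw [Finset.sum_add_distrib, Finset.sum_const, Finset.card_range, nsmul_eq_mul,
              ← Finset.mul_sum]
  refine hstep.trans (le_of_eq ?_)
  rw [hR, integral_const_mul, integral_add (integrable_const _) hi4, integral_finsetSum _ hi3,
    integral_const, probReal_univ, one_smul]
  congr 2
  refine Finset.sum_congr rfl fun θ _ => ?_
  rw [integral_add (integrable_const _) ((hi2 θ).const_mul _), integral_const, probReal_univ,
    one_smul, integral_const_mul, integral_finsetSum _ (hi1 θ)]
  congr 2
  refine Finset.sum_congr rfl fun k _ => ?_
  rw [integral_sub (integrable_cellDiv hκm θ (k + m)) (integrable_cellDiv hκm θ k)]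

/-- If the mean relative entropy of the components with respect to the mixture is sublinear in the
generation, then the sceneries are asymptotic. -/
lemma tendsto_scenery (hκm : Measurable κ) (hκ : ∀ h, κ h (ball (0 : Euc d) 1)ᶜ = 0)
    (hI : ∀ θ ∈ shifts d, ∀ δ > 0, ∀ᶠ n : ℕ in atTop,
      ∫ h, cellDiv (κ h) (ν.bind κ) θ n ∂ν ≤ δ * n) :
    Tendsto (fun n : ℕ => ∫ h, (∫ y, ((n : ℝ)⁻¹ * ∫ t in Icc (1 : ℝ) n, levyProkhorovDist
        (rescPM (ν.bind κ) y t).toMeasure (rescPM (κ h) y t).toMeasure) ∂(κ h)) ∂ν)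
      atTop (𝓝 0) := by
  rw [tendsto_order]
  refine ⟨fun a ha => Eventually.of_forall fun n => ha.trans_le ?_, fun η hη => ?_⟩
  · exact integral_nonneg fun h => integral_nonneg fun y => mul_nonneg (by positivity)
      (integral_nonneg fun t => ENNReal.toReal_nonneg)
  set A : ℝ := ((shifts d).card : ℝ) with hA
  set B : ℝ := 1 + 12 * (2 ^ 5) ^ d with hB
  have hA0 : 0 ≤ A := by positivity
  have hB0 : 0 < B := by positivity
  set τ : ℝ := min 1 (η / (4 * ((A + 1) * B))) with hτ
  have hτ0 : 0 < τ := lt_min one_pos (by positivity)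
  have hτη : A * (τ * B) ≤ η / 4 := by
    have h1 : τ ≤ η / (4 * ((A + 1) * B)) := min_le_right _ _
    rw [le_div_iff₀ (by positivity)] at h1
    have : 0 ≤ τ * B := by positivity
    nlinarith
  obtain ⟨m, hm1, hm2⟩ : ∃ m : ℕ, 32 * ((2 : ℝ) ^ m)⁻¹ ≤ 1 - (2 : ℝ) ^ (-τ) ∧
      32 * ((2 : ℝ) ^ m)⁻¹ ≤ τ := by
    have h0 : Tendsto (fun m : ℕ => 32 * ((2 : ℝ) ^ m)⁻¹) atTop (𝓝 0) := by
      have := (tendsto_pow_atTop_nhds_zero_of_lt_one (r := (2 : ℝ)⁻¹) (by norm_num)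
        (by norm_num)).const_mul 32
      simpa [inv_pow] using this
    have h1 : (2 : ℝ) ^ (-τ) < 1 := Real.rpow_lt_one_of_one_lt_of_neg (by norm_num) (by linarith)
    obtain ⟨m, h2, h3⟩ := ((h0.eventually (gt_mem_nhds (sub_pos.2 h1))).and
      (h0.eventually (gt_mem_nhds hτ0))).exists
    exact ⟨m, h2.le, h3.le⟩
  set D : ℝ := 2 * (2 ^ 5) ^ d * (4 * τ)⁻¹ with hD
  have hD0 : 0 < D := by positivity
  set δ : ℝ := η / (4 * ((A + 1) * D)) with hδ
  have hδ0 : 0 < δ := by positivity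
  have hδη : A * (D * δ) ≤ η / 4 := by
    have h1 : δ * (4 * ((A + 1) * D)) = η := by rw [hδ]; field_simp
    have : 0 ≤ D * δ := by positivity
    nlinarith
  have hinc : ∀ᶠ n : ℕ in atTop, ∀ θ ∈ shifts d, ∑ k ∈ Finset.range n,
      (∫ h, cellDiv (κ h) (ν.bind κ) θ (k + m) ∂ν - ∫ h, cellDiv (κ h) (ν.bind κ) θ k ∂ν) ≤
        δ * n :=
    (Finset.eventually_all (shifts d)).2 fun θ hθ =>
      sum_increment_le (I := fun k => ∫ h, cellDiv (κ h) (ν.bind κ) θ k ∂ν) (hI θ hθ) m hδ0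
  have h4 : ∀ᶠ n : ℕ in atTop, 4 / (n : ℝ) < η / 4 :=
    (tendsto_const_div_atTop_nhds_zero_nat 4).eventually (gt_mem_nhds (by positivity))
  filter_upwards [hinc, h4, eventually_gt_atTop 0] with n hn hn4 hn0
  have hn1 : (0 : ℝ) < n := by exact_mod_cast hn0
  refine (integral_integral_scenery_le hκm hκ hτ0 (min_le_left _ _) hτ0 hm1 hm2 n).trans_lt ?_
  have h5 : ∑ θ ∈ shifts d, (n * (τ + 2 * ((2 ^ 5) ^ d * (2 * τ + 4 * τ))) +
        D * ∑ k ∈ Finset.range n,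
          (∫ h, cellDiv (κ h) (ν.bind κ) θ (k + m) ∂ν - ∫ h, cellDiv (κ h) (ν.bind κ) θ k ∂ν)) ≤
      ∑ θ ∈ shifts d, (n * (τ * B) + D * (δ * n)) := by
    refine Finset.sum_le_sum fun θ hθ => add_le_add (le_of_eq ?_)
      (mul_le_mul_of_nonneg_left (hn θ hθ) hD0.le)
    rw [hB]; ring
  rw [Finset.sum_const, nsmul_eq_mul] at h5
  have h6 := mul_le_mul_of_nonneg_left (add_le_add (le_refl (4 : ℝ)) h5) (inv_nonneg.2 hn1.le)
  refine h6.trans_lt ?_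
  have h7 : (n : ℝ)⁻¹ * (4 + A * (n * (τ * B) + D * (δ * n))) =
      4 / n + A * (τ * B) + A * (D * δ) := by
    field_simp
    ring
  rw [h7]
  linarith

/-- The entropy comparison: when components and mixture have the same dimension, the mean relative
entropy is sublinear. -/
lemma cellDiv_sublinear (hκm : Measurable κ) (hκ : ∀ h, κ h (ball (0 : Euc d) 1)ᶜ = 0)
    {θ : Euc d} (hθ : θ ∈ shifts d) {s : ℝ} (hs : 0 ≤ s)
    (hdim : ∀ᵐ x ∂(ν.bind κ), Tendsto
      (fun r : ℝ => Real.log ((ν.bind κ).real (closedBall x r)) / Real.log r)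
      (𝓝[>] (0 : ℝ)) (𝓝 s))
    (hκdim : ∀ h, Tendsto (truncEnt (κ h) θ (s * Real.log 2)) atTop (𝓝 (s * Real.log 2)))
    {δ : ℝ} (hδ : 0 < δ) :
    ∀ᶠ n : ℕ in atTop, ∫ h, cellDiv (κ h) (ν.bind κ) θ n ∂ν ≤ δ * n := by
  have := isProbabilityMeasure_bind (ν := ν) hκm
  have hl2 := Real.log_pos (x := 2) (by norm_num)
  set S := s * Real.log 2 with hS
  have hS0 : 0 ≤ S := by positivity
  have hti : ∀ n, Integrable (fun h => truncEnt (κ h) θ S n) ν := fun n =>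
    Integrable.of_bound (measurable_truncEnt hκm θ S n).aestronglyMeasurable S
      (ae_of_all _ fun h => by
        rw [Real.norm_of_nonneg (truncEnt_mem (hκ h) hθ hS0 n).1]
        exact (truncEnt_mem (hκ h) hθ hS0 n).2)
  have hlim : Tendsto (fun n => ∫ h, truncEnt (κ h) θ S n ∂ν) atTop (𝓝 (∫ _, S ∂ν)) := by
    refine tendsto_integral_of_dominated_convergence (fun _ => S)
      (fun n => (hti n).aestronglyMeasurable) (integrable_const _)
      (fun n => ae_of_all _ fun h => ?_) (ae_of_all _ hκdim)
    rw [Real.norm_of_nonneg (truncEnt_mem (hκ h) hθ hS0 n).1]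
    exact (truncEnt_mem (hκ h) hθ hS0 n).2
  rw [integral_const, probReal_univ, one_smul] at hlim
  filter_upwards [hlim.eventually (lt_mem_nhds (show S - δ / 2 < S by linarith)),
    cellEnt_eventually_le (bind_ball_compl hκm hκ) hθ hs hdim (half_pos hδ)] with n h1 h2
  rw [integral_cellDiv hκm]
  have h3 : n * ∫ h, truncEnt (κ h) θ S n ∂ν ≤ ∫ h, cellEnt (κ h) θ n ∂ν := by
    rw [← integral_const_mul]
    exact integral_mono ((hti n).const_mul _) (integrable_cellEnt hκm θ n)
      fun h => truncEnt_le_cellEnt θ S n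
  have h4 : (n : ℝ) * (S - δ / 2) ≤ n * ∫ h, truncEnt (κ h) θ S n ∂ν :=
    mul_le_mul_of_nonneg_left h1.le (by positivity)
  linarith

end SceneryProof

theorem scenery_comparison_for_generalized_convolutions
    {d : ℕ} (hd : 1 ≤ d) (ν : Measure (ConfMaps d)) (hν : IsProbabilityMeasure ν)
    (μ : Measure (Euc d)) (hμ : IsProbabilityMeasure μ)
    (hμball : μ (Metric.ball (0 : Euc d) 1)ᶜ = 0)
    (hμexact : ExactDimensional μ)
    (hconvexact : ExactDimensional (ν.bind (fun h => μ.map (UniformFun.toFun h.val))))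
    (hdims : mdim (ν.bind (fun h => μ.map (UniformFun.toFun h.val))) = mdim μ)
    (hpos : 0 < mdim μ) :
    Tendsto (fun n : ℕ => ∫ h : ConfMaps d,
        (∫ y : Euc d,
          (((n : ℝ))⁻¹ * ∫ t in Set.Icc (1 : ℝ) (n : ℝ),
            levyProkhorovDist
              ((rescPM (ν.bind (fun h' => μ.map (UniformFun.toFun h'.val))) y t).toMeasure)
              ((rescPM (μ.map (UniformFun.toFun h.val)) y t).toMeasure))
          ∂(μ.map (UniformFun.toFun h.val))) ∂ν)
      atTop (𝓝 0) := by

  have := hν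
  have := hμ
  have hκm := measurable_map_confMaps (μ := μ) hμball
  have hprob : ∀ h : ConfMaps d, IsProbabilityMeasure (μ.map (UniformFun.toFun h.val)) :=
    fun h => Measure.isProbabilityMeasure_map (h.2.aemeasurable hμball)
  have hκ : ∀ h : ConfMaps d, μ.map (UniformFun.toFun h.val) (ball (0 : Euc d) 1)ᶜ = 0 :=
    fun h => h.2.map_ball_compl hμball
  refine tendsto_scenery hκm hκ fun θ hθ δ hδ => ?_
  refine cellDiv_sublinear hκm hκ hθ (s := (mdim μ).toReal) ENNReal.toReal_nonneg ?_ (fun h => ?_) hδ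
  · rw [← hdims]
    exact hconvexact
  · exact tendsto_truncEnt (h.2.aemeasurable hμball) (hκ h) hθ ENNReal.toReal_nonneg hμexact
      (h.2.map_closedBall_le hμball)
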